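/- Let q be an odd prime power, F a finite field with q elements, and n ≥ 2. Let S be the set of coordinate lines of Fⁿ, i.e., S = {Submodule.span F {Pi.single i 1} : i ∈ Fin n}, and let H be the setwise stabilizer of S in SL(n,F), i.e., {A ∈ SL(n,F) : (fun W => Submodule.map (Matrix.toLin' A) W) '' S = S}. Let H̄ be the image of H in PSLₙ(F) = SL(n,F)/center. Then H̄ is a maximal subgroup of PSLₙ(F) of odd index if and only if q ≡ 1 (mod 4), (n,q) ≠ (4,5), and (n = 2 → q ≥ 13). -/

import Mathlib

/-- The setwise stabilizer in `SL(n, F)` of a set `S` of submodules of `Fⁿ`, consisting of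
those special linear matrices `A` with
`(fun W => Submodule.map (Matrix.toLin' A) W) '' S = S`. -/
def slDecompStabilizer (F : Type*) [Field F] (n : ℕ) (S : Set (Submodule F (Fin n → F))) :
    Subgroup (Matrix.SpecialLinearGroup (Fin n) F) where
  carrier :=
    {A | (fun W => Submodule.map (Matrix.toLin' (A : Matrix (Fin n) (Fin n) F)) W) '' S = S}
  one_mem' := by
    simp [Matrix.SpecialLinearGroup.coe_one, Matrix.toLin'_one]
  mul_mem' := by
    intro A B hA hB
    simp only [Set.mem_setOf_eq] at *
    calc (fun W => Submodule.map
          (Matrix.toLin' ((A * B : Matrix.SpecialLinearGroup (Fin n) F) :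
            Matrix (Fin n) (Fin n) F)) W) '' S
        = (fun W => Submodule.map (Matrix.toLin' (A : Matrix (Fin n) (Fin n) F)) W) ''
            ((fun W => Submodule.map (Matrix.toLin' (B : Matrix (Fin n) (Fin n) F)) W) ''
              S) := by
          rw [← Set.image_comp]
          refine Set.image_congr fun W _ => ?_
          simp [Matrix.SpecialLinearGroup.coe_mul, Matrix.toLin'_mul, Submodule.map_comp]
      _ = S := by rw [hB, hA]
  inv_mem' := by
    intro A hA
    simp only [Set.mem_setOf_eq] at *
    have h1 : ((A⁻¹ : Matrix.SpecialLinearGroup (Fin n) F) : Matrix (Fin n) (Fin n) F) *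
        (A : Matrix (Fin n) (Fin n) F) = 1 := by
      rw [← Matrix.SpecialLinearGroup.coe_mul, inv_mul_cancel,
        Matrix.SpecialLinearGroup.coe_one]
    conv_lhs => rw [← hA]
    rw [← Set.image_comp]
    have : ((fun W => Submodule.map
          (Matrix.toLin' ((A⁻¹ : Matrix.SpecialLinearGroup (Fin n) F) :
            Matrix (Fin n) (Fin n) F)) W) ∘
        (fun W => Submodule.map (Matrix.toLin' (A : Matrix (Fin n) (Fin n) F)) W)) =
        fun W => W := by
      funext W
      simp only [Function.comp_apply, ← Submodule.map_comp, ← Matrix.toLin'_mul, h1,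
        Matrix.toLin'_one, Submodule.map_id]
    rw [this, Set.image_id']

/-!
Let `G` be a group of matrices of determinant one that contains the group `N` of monomial matrices
of determinant one. If `G` contains a transvection, then it contains them all and is the special
linear group, so maximality of `N` means that every non-monomial `G` contains a transvection.

The entries `x i j * x⁻¹ j i`, the *weights* of `x`, are invariant under diagonal matrices, and
suitable weights allow one to produce a transvection by conjugating diagonal matrices by `x`. This
settles the case in which all diagonal matrices are available. It applies to the action of the
stabilizer in `G` of a coordinate line on the quotient by that line, so that in a counterexample
these stabilizers are monomial. All nonzero weights in a column then agree, hence equal `1 / m`,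
where `m` is the number of nonzero entries of the column. In rank at most four, varying the
diagonal matrices in a conjugate gives a weight that is not of this form; this needs enough field
elements. For `n = 3` and `q = 5` all diagonal matrices become available after adjoining scalars.
In rank at least five, the alternating group fixes a column with equal entries, so that a conjugate
of it stabilizes a coordinate line and acts on the coordinate lines fixing one of them. This is
excluded by the simplicity of the alternating group.

The exceptions come from overgroups: the normalizer of a quaternion group of order eight for `n = 2`
and `q = 5` or `q = 9`, and the stabilizer of the images of the roots of `E₈` for `(n, q) = (4, 5)`.
The 2-adic valuation of the index of `N` in the special linear group is
`⌊n / 2⌋ * (v₂ (q + 1) - 1)`.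
-/

open Matrix Polynomial
open scoped MatrixGroups

section Monomial

variable {ι F : Type*} [DecidableEq ι] [Fintype ι] [Field F]

/-- The monomial matrix sending the basis vector `e j` to `d j • e (σ j)`. -/
def monomialGL (σ : Equiv.Perm ι) (d : ι → Fˣ) : GL ι F where
  val := of fun i j => if i = σ j then (d j : F) else 0
  inv := of fun i j => if j = σ i then ((d i)⁻¹ : F) else 0
  val_inv := by
    ext i j
    simp only [mul_apply, of_apply, one_apply, ite_mul, zero_mul]
    rw [Finset.sum_eq_single (σ⁻¹ i)]
    · simp [eq_comm]
    · rintro b - hb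
      rw [if_neg]
      rintro rfl
      simp at hb
    · simp
  inv_val := by
    ext i j
    obtain rfl | h := eq_or_ne i j
    · simp [mul_apply]
    · simp [mul_apply, h, h.symm]

theorem monomialGL_apply (σ : Equiv.Perm ι) (d : ι → Fˣ) (i j : ι) :
    monomialGL σ d i j = if i = σ j then (d j : F) else 0 := rfl

theorem monomialGL_mul_apply (σ : Equiv.Perm ι) (d : ι → Fˣ) (x : GL ι F) (i k : ι) :
    (monomialGL σ d * x) (σ i) k = d i * x i k := by
  simp [mul_apply, monomialGL_apply]

theorem mul_monomialGL_apply (σ : Equiv.Perm ι) (d : ι → Fˣ) (x : GL ι F) (i k : ι) :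
    (x * monomialGL σ d) i k = x i (σ k) * d k := by
  simp [mul_apply, monomialGL_apply]

theorem monomialGL_mulVec (σ : Equiv.Perm ι) (d : ι → Fˣ) (v : ι → F) (i : ι) :
    ((monomialGL σ d).val *ᵥ v) (σ i) = d i * v i := by
  simp [mulVec, dotProduct, monomialGL_apply]

theorem monomialGL_mul (σ τ : Equiv.Perm ι) (d e : ι → Fˣ) :
    monomialGL σ d * monomialGL τ e = monomialGL (σ * τ) fun j => d (τ j) * e j := by
  ext i k
  rw [mul_monomialGL_apply]
  by_cases h : i = σ (τ k) <;> simp [monomialGL_apply, h]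

theorem monomialGL_one : monomialGL (1 : Equiv.Perm ι) (1 : ι → Fˣ) = 1 := by
  ext i j
  by_cases h : i = j <;> simp [monomialGL_apply, h]

theorem monomialGL_inv (σ : Equiv.Perm ι) (d : ι → Fˣ) :
    (monomialGL σ d)⁻¹ = monomialGL σ⁻¹ fun j => (d (σ⁻¹ j))⁻¹ := by
  refine inv_eq_of_mul_eq_one_right ?_
  rw [monomialGL_mul, mul_inv_cancel, ← monomialGL_one]
  congr
  ext j
  simp

theorem monomialGL_inj {σ τ : Equiv.Perm ι} {d e : ι → Fˣ} :
    monomialGL σ d = monomialGL τ e ↔ σ = τ ∧ d = e := by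
  refine ⟨fun h => ?_, by rintro ⟨rfl, rfl⟩; rfl⟩
  have hentry (j : ι) : (d j : F) = if σ j = τ j then (e j : F) else 0 := by
    simpa [monomialGL_apply] using congrArg (fun x : GL ι F => x (σ j) j) h
  have hσ : σ = τ := by
    ext j
    by_contra hne
    exact (d j).ne_zero ((hentry j).trans (if_neg hne))
  subst hσ
  simpa [funext_iff, Units.ext_iff] using hentry

theorem det_monomialGL (σ : Equiv.Perm ι) (d : ι → Fˣ) :
    (monomialGL σ d).val.det = (Equiv.Perm.sign σ : ℤ) * ∏ j, (d j : F) := by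
  have h : (monomialGL σ d).val =
      (diagonal fun j => (d j : F)).submatrix (σ⁻¹ : Equiv.Perm ι) id := by
    ext i j
    obtain rfl | h := eq_or_ne i (σ j)
    · simp [monomialGL_apply]
    · simp [monomialGL_apply, h, Equiv.symm_apply_eq]
  rw [h, det_permute, det_diagonal, Equiv.Perm.sign_inv]

variable (ι F) in
/-- The group of invertible monomial matrices, the stabilizer in `GL ι F` of the set of
coordinate lines. -/
def monomialSubgroup : Subgroup (GL ι F) where
  carrier := {x | ∃ σ d, monomialGL σ d = x}
  one_mem' := ⟨1, 1, monomialGL_one⟩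
  mul_mem' := by
    rintro _ _ ⟨σ, d, rfl⟩ ⟨τ, e, rfl⟩
    exact ⟨_, _, (monomialGL_mul σ τ d e).symm⟩
  inv_mem' := by
    rintro _ ⟨σ, d, rfl⟩
    exact ⟨_, _, (monomialGL_inv σ d).symm⟩

theorem mem_monomialSubgroup {x : GL ι F} :
    x ∈ monomialSubgroup ι F ↔ ∃ σ d, monomialGL σ d = x := Iff.rfl

theorem monomialGL_mem (σ : Equiv.Perm ι) (d : ι → Fˣ) :
    monomialGL σ d ∈ monomialSubgroup ι F := ⟨σ, d, rfl⟩

theorem eq_of_mem_monomialSubgroup {x : GL ι F} (hx : x ∈ monomialSubgroup ι F) {i j l : ι}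
    (hi : x i j ≠ 0) (hl : x l j ≠ 0) : i = l := by
  obtain ⟨σ, d, rfl⟩ := hx
  simp only [monomialGL_apply, ne_eq, ite_eq_right_iff, not_forall] at hi hl
  exact hi.1.trans hl.1.symm

theorem exists_apply_ne_zero (x : GL ι F) (j : ι) : ∃ i, x i j ≠ 0 := by
  by_contra! h
  have hjj : (x⁻¹ * x) j j = 1 := by simp
  simp [-inv_mul_cancel, mul_apply, h] at hjj

theorem exists_apply_ne_zero_row (x : GL ι F) (i : ι) : ∃ j, x i j ≠ 0 := by
  by_contra! h
  have hii : (x * x⁻¹) i i = 1 := by rw [mul_inv_cancel]; simp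
  simp [-mul_inv_cancel, mul_apply, h] at hii

theorem mem_monomialSubgroup_of_forall_column {x : GL ι F}
    (h : ∀ j i l, x i j ≠ 0 → x l j ≠ 0 → i = l) : x ∈ monomialSubgroup ι F := by
  choose f hf using exists_apply_ne_zero x
  have hfx (i j : ι) (hi : i ≠ f j) : x i j = 0 := by
    by_contra hij
    exact hi (h j i (f j) hij (hf j))
  have hsurj : Function.Surjective f := by
    intro i
    by_contra! hi
    have hii : (x * x⁻¹) i i = 1 := by rw [mul_inv_cancel]; simp
    rw [Units.val_mul, mul_apply,
      Finset.sum_eq_zero fun j _ => by rw [hfx i j (hi j).symm, zero_mul]] at hii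
    exact zero_ne_one hii
  refine ⟨Equiv.ofBijective f (Finite.surjective_iff_bijective.mp hsurj),
    fun j => Units.mk0 _ (hf j), ?_⟩
  ext i j
  by_cases hi : i = f j
  · simp [monomialGL_apply, hi]
  · simp [monomialGL_apply, hi, hfx i j hi]

theorem exists_column_of_notMem_monomialSubgroup {x : GL ι F} (hx : x ∉ monomialSubgroup ι F) :
    ∃ j i l, x i j ≠ 0 ∧ x l j ≠ 0 ∧ i ≠ l := by
  contrapose! hx
  exact mem_monomialSubgroup_of_forall_column hx

/-- The diagonal torus of `GL ι F`, parametrized by the diagonal entries. -/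
def diagonalGL : (ι → Fˣ) →* GL ι F where
  toFun := monomialGL 1
  map_one' := monomialGL_one
  map_mul' d e := by rw [monomialGL_mul]; rfl

theorem monomialGL_one_left (d : ι → Fˣ) : monomialGL 1 d = diagonalGL d := rfl

theorem diagonalGL_mem (d : ι → Fˣ) : diagonalGL d ∈ monomialSubgroup ι F := ⟨1, d, rfl⟩

theorem coe_diagonalGL (d : ι → Fˣ) :
    (diagonalGL d : Matrix ι ι F) = diagonal fun j => (d j : F) := by
  ext i j
  by_cases h : i = j
  · subst h; simp [diagonalGL, monomialGL_apply]
  · simp [diagonalGL, monomialGL_apply, h]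

theorem conj_diagonalGL_apply (x : GL ι F) (d : ι → Fˣ) (k l : ι) :
    (x * diagonalGL d * x⁻¹) k l =
      (1 : Matrix ι ι F) k l + ∑ m, ((d m : F) - 1) * (x k m * x⁻¹ m l) := by
  have hone : (1 : Matrix ι ι F) k l = ∑ m, x k m * x⁻¹ m l := by
    rw [← mul_apply, ← Units.val_mul, mul_inv_cancel, Units.val_one]
  rw [hone, ← Finset.sum_add_distrib, Units.val_mul, Units.val_mul, coe_diagonalGL, mul_apply]
  refine Finset.sum_congr rfl fun m _ => ?_
  rw [mul_diagonal]
  ring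

theorem conj_diagonalGL_mulSingle_apply (x : GL ι F) (j : ι) (ε : Fˣ) (k l : ι) :
    (x * diagonalGL (Pi.mulSingle j ε) * x⁻¹) k l =
      (1 : Matrix ι ι F) k l + (ε - 1) * (x k j * x⁻¹ j l) := by
  rw [conj_diagonalGL_apply, Finset.sum_eq_single j]
  · simp
  · rintro m - hm
    simp [Pi.mulSingle_eq_of_ne hm]
  · simp

variable (ι F) in
/-- The group of monomial matrices of determinant one, as a subgroup of `GL ι F`. -/
def specialMonomialSubgroup : Subgroup (GL ι F) :=
  monomialSubgroup ι F ⊓ GeneralLinearGroup.det.ker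

theorem specialMonomialSubgroup_le : specialMonomialSubgroup ι F ≤ monomialSubgroup ι F :=
  inf_le_left

theorem mem_ker_det {x : GL ι F} :
    x ∈ (GeneralLinearGroup.det : GL ι F →* Fˣ).ker ↔ x.val.det = 1 := by
  rw [MonoidHom.mem_ker, Units.ext_iff]
  rfl

theorem monomialGL_mem_special {σ : Equiv.Perm ι} {d : ι → Fˣ}
    (h : ((Equiv.Perm.sign σ : ℤ) : F) * ∏ j, (d j : F) = 1) :
    monomialGL σ d ∈ specialMonomialSubgroup ι F :=
  ⟨monomialGL_mem σ d, mem_ker_det.mpr ((det_monomialGL σ d).trans h)⟩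

theorem det_diagonalGL_mulSingle (i : ι) (ε : Fˣ) :
    GeneralLinearGroup.det (diagonalGL (Pi.mulSingle i ε)) = ε := by
  rw [Units.ext_iff, GeneralLinearGroup.val_det_apply, coe_diagonalGL, det_diagonal,
    ← Units.coe_prod, Finset.prod_pi_mulSingle', if_pos (Finset.mem_univ i)]

theorem exists_mul_diagonalGL_mem_special {x : GL ι F} (hx : x ∈ monomialSubgroup ι F) (i : ι) :
    ∃ ε : Fˣ, x * diagonalGL (Pi.mulSingle i ε) ∈ specialMonomialSubgroup ι F := by
  refine ⟨(GeneralLinearGroup.det x)⁻¹, (monomialSubgroup ι F).mul_mem hx (diagonalGL_mem _), ?_⟩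
  change GeneralLinearGroup.det (x * _) = 1
  rw [map_mul, det_diagonalGL_mulSingle, mul_inv_cancel]

theorem exists_monomialGL_mem_special [Nonempty ι] (σ : Equiv.Perm ι) :
    ∃ d : ι → Fˣ, monomialGL σ d ∈ specialMonomialSubgroup ι F := by
  obtain ⟨i⟩ := ‹Nonempty ι›
  obtain ⟨ε, hε⟩ := exists_mul_diagonalGL_mem_special (monomialGL_mem σ (1 : ι → Fˣ)) i
  rw [← monomialGL_one_left, monomialGL_mul] at hε
  exact ⟨_, hε⟩

theorem diagonalGL_mem_special {d : ι → Fˣ} (h : ∏ j, d j = 1) :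
    diagonalGL d ∈ specialMonomialSubgroup ι F := by
  refine monomialGL_mem_special ?_
  rw [Equiv.Perm.sign_one, Units.val_one, Int.cast_one, one_mul, ← Units.coe_prod, h,
    Units.val_one]

theorem prod_mulSingle_mul_mulSingle_inv (i j : ι) (ε : Fˣ) :
    ∏ k, (Pi.mulSingle i ε * Pi.mulSingle j ε⁻¹ : ι → Fˣ) k = 1 := by
  simp [Finset.prod_mul_distrib]

end Monomial

section Weight

variable {ι F : Type*} [DecidableEq ι] [Fintype ι] [Field F]

/-- The entrywise product of `x` with the transpose of its inverse. Unlike the entries of `x`, it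
is unchanged when `x` is multiplied by diagonal matrices; its rows and columns have sum one. -/
def weight (x : GL ι F) (i j : ι) : F := x i j * x⁻¹ j i

theorem weight_inv (x : GL ι F) (i j : ι) : weight x⁻¹ i j = weight x j i := by
  rw [weight, weight, inv_inv, mul_comm]

theorem sum_weight_column (x : GL ι F) (j : ι) : ∑ i, weight x i j = 1 := by
  have h : (x⁻¹ * x) j j = 1 := by simp
  rw [← h, Units.val_mul, mul_apply]
  exact Finset.sum_congr rfl fun i _ => mul_comm _ _

theorem sum_weight_row (x : GL ι F) (i : ι) : ∑ j, weight x i j = 1 := by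
  simpa only [weight_inv] using sum_weight_column x⁻¹ i

theorem conj_diagonalGL_inv (x : GL ι F) (d : ι → Fˣ) :
    (x * diagonalGL d * x⁻¹)⁻¹ = x * diagonalGL d⁻¹ * x⁻¹ := by
  rw [map_inv]
  group

theorem weight_conj_mulSingle_self (x : GL ι F) (i j : ι) (ε : Fˣ) :
    weight (x * diagonalGL (Pi.mulSingle j ε) * x⁻¹) i i =
      (1 + (ε - 1) * weight x i j) * (1 + ((ε : F)⁻¹ - 1) * weight x i j) := by
  simp only [weight, conj_diagonalGL_inv, ← Pi.mulSingle_inv, conj_diagonalGL_mulSingle_apply,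
    one_apply_eq, Units.val_inv_eq_inv_val]

theorem weight_conj_mulSingle_of_ne (x : GL ι F) {i l : ι} (hil : i ≠ l) (j : ι) (ε : Fˣ) :
    weight (x * diagonalGL (Pi.mulSingle j ε) * x⁻¹) i l =
      (ε - 1) * ((ε : F)⁻¹ - 1) * (weight x i j * weight x l j) := by
  simp only [weight, conj_diagonalGL_inv, ← Pi.mulSingle_inv, conj_diagonalGL_mulSingle_apply,
    one_apply_ne hil, one_apply_ne hil.symm, Units.val_inv_eq_inv_val]
  ring

end Weight

section FieldElements

variable {F : Type*} [Field F] [Fintype F]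

theorem exists_unit_eval_ne_zero {f : F[X]} (hf : f ≠ 0)
    (hcard : f.natDegree + 1 < Fintype.card F) : ∃ ε : Fˣ, f.eval (ε : F) ≠ 0 := by
  have hdeg : ((X * f).natDegree : Cardinal) < Cardinal.mk F := by
    rw [Cardinal.mk_fintype, natDegree_X_mul hf]
    exact_mod_cast hcard
  obtain ⟨ε, hε⟩ := exists_eval_ne_zero_of_natDegree_lt_card _ (mul_ne_zero X_ne_zero hf) hdeg
  rw [eval_mul, eval_X, mul_ne_zero_iff] at hε
  exact ⟨Units.mk0 ε hε.1, hε.2⟩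

theorem five_eq_zero_of_card_eq_five (hF : Fintype.card F = 5) : (5 : F) = 0 := by
  simpa [hF] using Nat.cast_card_eq_zero F

theorem exists_unit_sub_one_mul_inv_sub_one [NeZero (2 : F)]
    (hF : Fintype.card F = 5 ∨ 7 ≤ Fintype.card F) {c : F} (hc : c = 1 ∨ 2 * c = 1) :
    ∃ ε : Fˣ, ((ε : F) - 1) * ((ε : F)⁻¹ - 1) * c ≠ 0 ∧
      ((ε : F) - 1) * ((ε : F)⁻¹ - 1) * c ≠ 1 ∧
      2 * (((ε : F) - 1) * ((ε : F)⁻¹ - 1) * c) ≠ 1 := by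
  have h2 : (2 : F) ≠ 0 := two_ne_zero
  have hc0 : c ≠ 0 := by rintro rfl; simp at hc
  rcases hF with hF | hF
  · have h5 := five_eq_zero_of_card_eq_five hF
    have hvalue : (((-1 : Fˣ) : F) - 1) * (((-1 : Fˣ) : F)⁻¹ - 1) * c = 2 * (2 * c) := by
      rw [Units.val_neg, Units.val_one, inv_neg, inv_one]
      ring
    refine ⟨-1, ?_⟩
    rw [hvalue]
    rcases hc with rfl | hc
    · exact ⟨by simpa, fun h => h2 (by linear_combination h5 - h),
        fun h => h2 (by linear_combination h - h5)⟩
    · rw [hc]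
      exact ⟨by simpa, fun h => one_ne_zero (α := F) (by linear_combination h),
        fun h => h2 (by linear_combination h5 - h)⟩
  · obtain ⟨ε, hε⟩ := exists_unit_eval_ne_zero
      (f := (X - C 1) * ((C c * (X - 1) ^ 2 + X) * (C (2 * c) * (X - 1) ^ 2 + X)))
      (by
        refine mul_ne_zero (X_sub_C_ne_zero 1) (mul_ne_zero ?_ ?_) <;> intro h
        · exact hc0 (by simpa using congrArg (eval 0) h)
        · exact mul_ne_zero h2 hc0 (by simpa using congrArg (eval 0) h))
      (lt_of_lt_of_le (Nat.lt_succ_of_le (Nat.succ_le_succ (by compute_degree))) hF)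
    simp only [eval_mul, eval_X, eval_sub, eval_add, eval_one, eval_pow, eval_C,
      mul_ne_zero_iff] at hε
    obtain ⟨h1, h3, h4⟩ := hε
    have hε0 := ε.ne_zero
    refine ⟨ε, mul_ne_zero (mul_ne_zero h1 ?_) hc0, fun h => h3 ?_, fun h => h4 ?_⟩
    · exact fun h => h1 (by field_simp at h; linear_combination -h)
    · field_simp at h; linear_combination -h
    · field_simp at h; linear_combination -h

theorem exists_unit_half_conj [NeZero (2 : F)] (hF : 7 ≤ Fintype.card F) {c : F}
    (hc : 2 * c = 1) :
    ∃ ε : Fˣ, (1 + ((ε : F) - 1) * c) * (1 + ((ε : F)⁻¹ - 1) * c) ≠ 0 ∧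
      (1 + ((ε : F) - 1) * c) * (1 + ((ε : F)⁻¹ - 1) * c) ≠ 1 ∧
      2 * ((1 + ((ε : F) - 1) * c) * (1 + ((ε : F)⁻¹ - 1) * c)) ≠ 1 := by
  have h2 : (2 : F) ≠ 0 := two_ne_zero
  obtain ⟨ε, hε⟩ := exists_unit_eval_ne_zero (f := (X - C (1 : F)) * ((X + 1) * (X ^ 2 + 1)))
    (by
      refine mul_ne_zero (X_sub_C_ne_zero 1) (mul_ne_zero ?_ ?_) <;> intro h <;>
      simpa using congrArg (eval 0) h)
    (lt_of_lt_of_le (b := 6) (Nat.lt_succ_of_le (Nat.succ_le_succ (by compute_degree)))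
      (by lia))
  simp only [eval_mul, eval_X, eval_sub, eval_add, eval_one, eval_pow, eval_C,
    mul_ne_zero_iff] at hε
  obtain ⟨h1, h3, h4⟩ := hε
  have hε0 := ε.ne_zero
  have hvalue : 2 ^ 2 * (ε : F) * ((1 + ((ε : F) - 1) * c) * (1 + ((ε : F)⁻¹ - 1) * c)) =
      ((ε : F) + 1) ^ 2 := by
    rw [eq_div_of_mul_eq h2 ((mul_comm _ _).trans hc)]
    field_simp
    ring
  refine ⟨ε, fun h => ?_, fun h => ?_, fun h => ?_⟩
  · rw [h, mul_zero] at hvalue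
    exact pow_ne_zero 2 h3 hvalue.symm
  · rw [h] at hvalue
    exact pow_ne_zero 2 h1 (by linear_combination -hvalue)
  · exact h4 (mul_left_cancel₀ (one_ne_zero (α := F)) (by linear_combination 2 * ε * h - hvalue))

end FieldElements

section Transvection

variable {ι F : Type*} [DecidableEq ι] [Fintype ι] [Field F] {G : Subgroup (GL ι F)}

/-- The linear group `G` contains a nontrivial elementary transvection. -/
def HasTransvection (G : Subgroup (GL ι F)) : Prop :=
  ∃ i j, ∃ hij : i ≠ j, ∃ a : F, a ≠ 0 ∧
    SpecialLinearGroup.toGL (SpecialLinearGroup.transvection hij a) ∈ G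

theorem hasTransvection_of_coe_eq {x : GL ι F} (hx : x ∈ G) {i j : ι} (hij : i ≠ j) {a : F}
    (ha : a ≠ 0) (h : x.val = transvection i j a) : HasTransvection G := by
  refine ⟨i, j, hij, a, ha, ?_⟩
  convert hx
  exact Units.ext h.symm

theorem transvection_conj_monomialGL {i j : ι} (hij : i ≠ j) (a : F) (σ : Equiv.Perm ι)
    (d : ι → Fˣ) :
    monomialGL σ d * SpecialLinearGroup.toGL (SpecialLinearGroup.transvection hij a) *
        (monomialGL σ d)⁻¹ =
      SpecialLinearGroup.toGL
        (SpecialLinearGroup.transvection (σ.injective.ne hij) (d i * a * (d j)⁻¹)) := by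
  have hcoe {i j : ι} (hij : i ≠ j) (a : F) (k l : ι) :
      SpecialLinearGroup.toGL (SpecialLinearGroup.transvection hij a) k l =
        (if k = l then 1 else 0) + if i = k ∧ j = l then a else 0 := by
    rw [← one_apply, ← single_apply]
    rfl
  rw [mul_inv_eq_iff_eq_mul]
  ext k l
  obtain ⟨k, rfl⟩ := σ.surjective k
  rw [monomialGL_mul_apply, mul_monomialGL_apply, hcoe, hcoe]
  simp only [σ.injective.eq_iff]
  split_ifs with hkl hij' hij' <;> simp_all

theorem transvection_mem_of_ne_zero [NeZero (2 : F)] (hN : specialMonomialSubgroup ι F ≤ G)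
    {i j : ι} (hij : i ≠ j) {a : F} (ha : a ≠ 0)
    (h : SpecialLinearGroup.toGL (SpecialLinearGroup.transvection hij a) ∈ G) (b : F) :
    SpecialLinearGroup.toGL (SpecialLinearGroup.transvection hij b) ∈ G := by
  have hscale {c : F} (hc : SpecialLinearGroup.toGL (SpecialLinearGroup.transvection hij c) ∈ G)
      (ε : F) : SpecialLinearGroup.toGL (SpecialLinearGroup.transvection hij (c * ε ^ 2)) ∈ G := by
    obtain rfl | hε := eq_or_ne ε 0
    · simp [SpecialLinearGroup.transvection_coeff_zero]
    let d : ι → Fˣ := Pi.mulSingle i (Units.mk0 ε hε) * Pi.mulSingle j (Units.mk0 ε hε)⁻¹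
    have hd : diagonalGL d ∈ G :=
      hN (diagonalGL_mem_special (prod_mulSingle_mul_mulSingle_inv i j _))
    have hconj := G.mul_mem (G.mul_mem hd hc) (G.inv_mem hd)
    rw [← monomialGL_one_left, transvection_conj_monomialGL] at hconj
    have hcoeff : (d i : F) * c * ((d j : F))⁻¹ = c * ε ^ 2 := by
      simp [d, hij, hij.symm]
      ring
    rwa [Units.val_inv_eq_inv_val, hcoeff] at hconj
  have hneg : SpecialLinearGroup.toGL (SpecialLinearGroup.transvection hij (-a)) ∈ G := by
    rw [← SpecialLinearGroup.transvection_inv, map_inv]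
    exact G.inv_mem h
  -- Every scalar is a difference of two squares.
  have hsq : b = a * ((b / a + 1) / 2) ^ 2 + (-a) * ((b / a - 1) / 2) ^ 2 := by
    have h2 : (2 : F) ≠ 0 := two_ne_zero
    field_simp
    ring
  rw [hsq, SpecialLinearGroup.transvection_add, map_mul]
  exact G.mul_mem (hscale h _) (hscale hneg _)

theorem exists_perm_apply_pair {α : Type*} {i j k l : α} (hij : i ≠ j) (hkl : k ≠ l) :
    ∃ σ : Equiv.Perm α, σ i = k ∧ σ j = l := by
  classical
  refine ⟨Equiv.swap (Equiv.swap i k j) l * Equiv.swap i k, ?_, by simp⟩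
  rw [Equiv.Perm.mul_apply, Equiv.swap_apply_left, Equiv.swap_apply_of_ne_of_ne _ hkl]
  exact fun h => hij (by simpa using congrArg (Equiv.swap i k) h)

theorem transvection_mem_of_hasTransvection [NeZero (2 : F)]
    (hN : specialMonomialSubgroup ι F ≤ G) (hT : HasTransvection G) {k l : ι} (hkl : k ≠ l)
    (b : F) : SpecialLinearGroup.toGL (SpecialLinearGroup.transvection hkl b) ∈ G := by
  obtain ⟨i, j, hij, a, ha, h⟩ := hT
  obtain ⟨σ, rfl, rfl⟩ := exists_perm_apply_pair hij hkl
  have : Nonempty ι := ⟨i⟩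
  obtain ⟨d, hd⟩ := exists_monomialGL_mem_special (F := F) σ
  replace hd := hN hd
  have hconj := G.mul_mem (G.mul_mem hd h) (G.inv_mem hd)
  rw [transvection_conj_monomialGL] at hconj
  exact transvection_mem_of_ne_zero hN hkl (by simp [ha]) hconj b

theorem ker_det_le_of_hasTransvection [NeZero (2 : F)] (hN : specialMonomialSubgroup ι F ≤ G)
    (hT : HasTransvection G) : (GeneralLinearGroup.det : GL ι F →* Fˣ).ker ≤ G := by
  have : Nontrivial ι := let ⟨i, j, hij, _⟩ := hT; ⟨i, j, hij⟩
  intro x hx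
  rw [show x = SpecialLinearGroup.toGL ⟨x.val, mem_ker_det.mp hx⟩ from Units.ext rfl]
  refine SpecialLinearGroup.diagonal_transvection_induction'
    (P := fun A => SpecialLinearGroup.toGL A ∈ G) _ (fun i j hij c hc => ?_)
    (fun i j hij a => transvection_mem_of_hasTransvection hN hT hij a)
    (fun A B hA hB => by rw [map_mul]; exact G.mul_mem hA hB)
  have hdiag : SpecialLinearGroup.toGL (SpecialLinearGroup.diag2n hij c hc) = diagonalGL
      (Pi.mulSingle i (Units.mk0 c hc) * Pi.mulSingle j (Units.mk0 c hc)⁻¹) := by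
    ext k l
    rw [coe_diagonalGL]
    obtain rfl | hkl := eq_or_ne k l
    · by_cases hki : k = i
      · subst hki
        simp [SpecialLinearGroup.diag2n_coe, hij]
      · by_cases hkj : k = j <;> simp_all [SpecialLinearGroup.diag2n_coe]
    · simp [SpecialLinearGroup.diag2n_coe, hkl]
  rw [hdiag]
  exact hN (diagonalGL_mem_special (prod_mulSingle_mul_mulSingle_inv i j _))

theorem hasTransvection_of_rowUnipotent [NeZero (2 : F)] (hN : specialMonomialSubgroup ι F ≤ G)
    {x : GL ι F} (hx : x ∈ G) {o l : ι} {r : ι → F}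
    (hxr : x.val = 1 + vecMulVec (Pi.single o 1) r) (ho : r o = 0) (hl : r l ≠ 0) :
    HasTransvection G := by
  have hol : o ≠ l := by rintro rfl; exact hl ho
  let d : ι → Fˣ := Pi.mulSingle o (-1) * Pi.mulSingle l (-1)⁻¹
  have hd : diagonalGL d ∈ G :=
    hN (diagonalGL_mem_special (prod_mulSingle_mul_mulSingle_inv o l _))
  -- Conjugation by `d` negates `r` except at `l`.
  have hconj : (diagonalGL d * x * (diagonalGL d)⁻¹).val =
      1 + vecMulVec (Pi.single o 1) (Pi.single l (2 * r l) - r) := by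
    rw [Units.val_mul, Units.val_mul, hxr, mul_add, add_mul, mul_one, ← Units.val_mul,
      mul_inv_cancel, Units.val_one, ← map_inv, coe_diagonalGL, coe_diagonalGL]
    ext k m
    rw [Matrix.add_apply, Matrix.add_apply, mul_diagonal, diagonal_mul, vecMulVec_apply,
      vecMulVec_apply]
    obtain rfl | hk := eq_or_ne k o
    · obtain rfl | hm := eq_or_ne m l
      · simp [d, hol, hol.symm]; ring
      · obtain rfl | hmo := eq_or_ne m k
        · simp [ho, hm]
        · simp [d, hol, hmo, hm]
    · simp [hk]
  refine hasTransvection_of_coe_eq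
    (G.mul_mem hx (G.mul_mem (G.mul_mem hd hx) (G.inv_mem hd))) hol
    (mul_ne_zero two_ne_zero hl) ?_
  rw [Units.val_mul, hconj, hxr, add_mul, one_mul, mul_add, mul_one, vecMulVec_mul_vecMulVec,
    dotProduct_single_one, ho, zero_smul, vecMulVec_zero, add_zero, add_assoc, ← vecMulVec_add,
    sub_add_cancel, transvection, ← mul_one (2 * r l), ← smul_eq_mul (2 * r l) 1, ← smul_single,
    single_eq_single_vecMulVec_single, Pi.single_smul, vecMulVec_smul]

theorem reflection_mul_reflection_sq {R : Type*} [Ring R] {e E : R} (he : e * e = e)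
    (hE : E * E = E) (heE : e * E = 0) :
    ((1 - 2 * e) * (1 - 2 * E)) ^ 2 = 1 + 4 * (E * e) := by
  have hprod : (1 - 2 * e) * (1 - 2 * E) = 1 - 2 * e - 2 * E := by
    calc (1 - 2 * e) * (1 - 2 * E) = 1 - 2 * e - 2 * E + 4 * (e * E) := by noncomm_ring
      _ = 1 - 2 * e - 2 * E := by rw [heE, mul_zero, add_zero]
  calc ((1 - 2 * e) * (1 - 2 * E)) ^ 2
      = 1 - 4 * e - 4 * E + 4 * (e * e) + 4 * (E * E) + 4 * (e * E) + 4 * (E * e) := by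
        rw [hprod]; noncomm_ring
    _ = 1 + 4 * (E * e) := by rw [he, hE, heE]; noncomm_ring

theorem coe_conj_reflection (x : GL ι F) (j : ι) :
    (x * diagonalGL (Pi.mulSingle j (-1)) * x⁻¹).val =
      1 - 2 * vecMulVec (x.val.col j) (x⁻¹.val.row j) := by
  ext k l
  rw [conj_diagonalGL_mulSingle_apply, Matrix.sub_apply, two_mul, Matrix.add_apply,
    vecMulVec_apply, Units.val_neg, Units.val_one, col_apply, row_apply]
  ring

theorem coe_reflection (k : ι) :
    (diagonalGL (Pi.mulSingle k (-1)) : GL ι F).val =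
      1 - 2 * vecMulVec (Pi.single k 1) (Pi.single k 1) := by
  have hcol : (1 : Matrix ι ι F).col k = Pi.single k 1 := by
    ext i
    rw [col_apply, one_apply, Pi.single_apply]
  have hrow : (1 : Matrix ι ι F).row k = Pi.single k 1 := by
    ext i
    rw [row_apply, one_eq_pi_single]
  simpa [hcol, hrow] using coe_conj_reflection (1 : GL ι F) k

theorem conj_diagonalGL_mem (hG : monomialSubgroup ι F ≤ G) {x : GL ι F} (hx : x ∈ G)
    (d : ι → Fˣ) : x * diagonalGL d * x⁻¹ ∈ G :=
  G.mul_mem (G.mul_mem hx (hG (diagonalGL_mem d))) (G.inv_mem hx)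

theorem hasTransvection_of_inv_apply_eq_zero [NeZero (2 : F)] (hG : monomialSubgroup ι F ≤ G)
    {x : GL ι F} (hx : x ∈ G) {i j : ι} (hij : x i j ≠ 0) (hji : x⁻¹ j i = 0) :
    HasTransvection G := by
  obtain ⟨l, hl⟩ := exists_apply_ne_zero_row x⁻¹ j
  have h4 : (4 : F) ≠ 0 := by
    rw [show (4 : F) = 2 * 2 by norm_num]
    exact mul_ne_zero two_ne_zero two_ne_zero
  refine hasTransvection_of_rowUnipotent (specialMonomialSubgroup_le.trans hG) (o := i) (l := l)
    (r := (4 * x i j) • x⁻¹.val.row j)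
    (G.pow_mem (G.mul_mem (conj_diagonalGL_mem hG hx (Pi.mulSingle j (-1)))
      (hG (diagonalGL_mem (Pi.mulSingle i (-1))))) 2) ?_ (by simp [-coe_units_inv, hji])
    (mul_ne_zero (mul_ne_zero h4 hij) hl)
  have hrow : x⁻¹.val.row j ⬝ᵥ x.val.col j = 1 := sum_weight_row x⁻¹ j
  rw [Units.val_pow_eq_pow_val, Units.val_mul, coe_reflection, coe_conj_reflection,
    reflection_mul_reflection_sq (by rw [vecMulVec_mul_vecMulVec, hrow, one_smul])
      (by simp [vecMulVec_mul_vecMulVec])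
      (by rw [vecMulVec_mul_vecMulVec, dotProduct_single_one, row_apply, hji, zero_smul,
        vecMulVec_zero]),
    vecMulVec_mul_vecMulVec, single_one_dotProduct, col_apply, ← map_ofNat (algebraMap F _),
    ← Algebra.smul_def, vecMulVec_smul, vecMulVec_smul, smul_smul]

theorem hasTransvection_of_weight_ne [NeZero (2 : F)] (hG : monomialSubgroup ι F ≤ G)
    {x : GL ι F} (hx : x ∈ G) {i j : ι} (h0 : weight x i j ≠ 0) (h1 : weight x i j ≠ 1)
    (h2 : 2 * weight x i j ≠ 1) : HasTransvection G := by
  have hw1 : weight x i j - 1 ≠ 0 := sub_ne_zero.mpr h1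
  set w := weight x i j with hw
  let ε : Fˣ := Units.mk0 (w / (w - 1)) (div_ne_zero h0 hw1)
  refine hasTransvection_of_inv_apply_eq_zero hG (conj_diagonalGL_mem hG hx (Pi.mulSingle j ε))
    (i := i) (j := i) ?_ ?_
  · rw [conj_diagonalGL_mulSingle_apply, one_apply_eq, ← weight, ← hw, Units.val_mk0]
    have hvalue : 1 + (w / (w - 1) - 1) * w = (2 * w - 1) / (w - 1) := by
      field_simp
      ring
    rw [hvalue]
    exact div_ne_zero (sub_ne_zero.mpr h2) hw1
  · rw [conj_diagonalGL_inv, ← Pi.mulSingle_inv, conj_diagonalGL_mulSingle_apply, one_apply_eq,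
      ← weight, ← hw, Units.val_inv_eq_inv_val, Units.val_mk0, inv_div]
    field_simp
    ring

theorem weight_ne_zero_of_not_hasTransvection [NeZero (2 : F)] (hG : monomialSubgroup ι F ≤ G)
    (hT : ¬HasTransvection G) {x : GL ι F} (hx : x ∈ G) {i j : ι} (hij : x i j ≠ 0) :
    weight x i j ≠ 0 :=
  mul_ne_zero hij fun hji => hT (hasTransvection_of_inv_apply_eq_zero hG hx hij hji)

theorem weight_ne_one_of_not_hasTransvection [Fintype F] [NeZero (2 : F)]
    (hF : Fintype.card F = 5 ∨ 7 ≤ Fintype.card F) (hG : monomialSubgroup ι F ≤ G)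
    (hT : ¬HasTransvection G) {x : GL ι F} (hx : x ∈ G) {i j l : ι} (hl : x l j ≠ 0)
    (hil : i ≠ l) : weight x i j ≠ 1 := by
  intro h1
  have hc : weight x l j = 1 ∨ 2 * weight x l j = 1 := by
    by_contra! h
    exact hT (hasTransvection_of_weight_ne hG hx
      (weight_ne_zero_of_not_hasTransvection hG hT hx hl) h.1 h.2)
  obtain ⟨ε, hε⟩ := exists_unit_sub_one_mul_inv_sub_one hF hc
  have hconj := weight_conj_mulSingle_of_ne x hil j ε
  rw [h1, one_mul] at hconj
  rw [← hconj] at hε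
  exact hT (hasTransvection_of_weight_ne hG (conj_diagonalGL_mem hG hx _) hε.1 hε.2.1 hε.2.2)

theorem two_mul_weight_ne_one_of_not_hasTransvection [Fintype F] [NeZero (2 : F)]
    (hF : 7 ≤ Fintype.card F) (hG : monomialSubgroup ι F ≤ G) (hT : ¬HasTransvection G)
    {x : GL ι F} (hx : x ∈ G) (i j : ι) : 2 * weight x i j ≠ 1 := by
  intro h
  obtain ⟨ε, hε⟩ := exists_unit_half_conj hF h
  rw [← weight_conj_mulSingle_self x i j ε] at hε
  exact hT (hasTransvection_of_weight_ne hG (conj_diagonalGL_mem hG hx _) hε.1 hε.2.1 hε.2.2)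

end Transvection

section FieldOfOrderFive

variable {ι F : Type*} [DecidableEq ι] [Fintype ι] [Field F] {G : Subgroup (GL ι F)}

theorem conj_swap_apply_self {x : GL ι F} {i m j : ι} (him : i ≠ m) (hmj : x m j = 0)
    (hjm : x⁻¹ j m = 0) :
    (x⁻¹ * monomialGL (Equiv.swap i m) (1 : ι → Fˣ) * x) j j = 1 - weight x i j := by
  have hrow (k : ι) : (monomialGL (Equiv.swap i m) (1 : ι → Fˣ) * x) k j =
      x (Equiv.swap i m k) j := by
    simpa using monomialGL_mul_apply (Equiv.swap i m) 1 x (Equiv.swap i m k) j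
  rw [mul_assoc, Units.val_mul, mul_apply, ← sum_weight_column x j, eq_sub_iff_add_eq,
    ← Finset.sum_erase_add _ _ (Finset.mem_univ i),
    ← Finset.sum_erase_add _ _ (Finset.mem_univ i),
    hrow, Equiv.swap_apply_left, hmj, mul_zero, add_zero, weight]
  congr 1
  refine Finset.sum_congr rfl fun k hk => ?_
  obtain rfl | hkm := eq_or_ne k m
  · rw [weight, hjm, zero_mul, mul_zero]
  · rw [hrow, Equiv.swap_apply_of_ne_of_ne (Finset.ne_of_mem_erase hk) hkm, weight, mul_comm]

theorem conj_diagonalGL_ite_apply_self (x : GL ι F) (s : Finset ι) (b : Fˣ) (i : ι) :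
    (x * diagonalGL (fun k => if k ∈ s then b else 1) * x⁻¹) i i =
      1 + ((b : F) - 1) * ∑ k ∈ s, weight x i k := by
  rw [conj_diagonalGL_apply, one_apply_eq, Finset.mul_sum,
    ← Finset.sum_subset (Finset.subset_univ s)]
  · congr 1
    exact Finset.sum_congr rfl fun k hk => by rw [if_pos hk, weight]
  · intro k _ hk
    rw [if_neg hk, Units.val_one, sub_self, zero_mul]

theorem neZero_two_of_five_eq_zero (h5 : (5 : F) = 0) : NeZero (2 : F) :=
  ⟨fun h => one_ne_zero (α := F) (by linear_combination h5 - 2 * h)⟩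

theorem hasTransvection_of_weight_eq_three (h5 : (5 : F) = 0) (hG : monomialSubgroup ι F ≤ G)
    {x : GL ι F} (hx : x ∈ G) {i m j : ι} (him : i ≠ m) (hmj : x m j = 0)
    (hij : weight x i j = 3) : HasTransvection G := by
  have := neZero_two_of_five_eq_zero h5
  have h2 : (2 : F) ≠ 0 := two_ne_zero
  by_contra hT
  have hjm : x⁻¹ j m = 0 := by
    by_contra h
    exact hT (hasTransvection_of_inv_apply_eq_zero hG (G.inv_mem hx) h (by rwa [inv_inv]))
  set g : GL ι F := x⁻¹ * monomialGL (Equiv.swap i m) (1 : ι → Fˣ) * x with hg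
  have hgg : g⁻¹ = g := by
    rw [hg, _root_.mul_inv_rev, _root_.mul_inv_rev, inv_inv, monomialGL_inv, Equiv.swap_inv,
      mul_assoc]
    simp [← Pi.one_def]
  have hgj : weight g j j = 4 := by
    rw [weight, hgg, conj_swap_apply_self him hmj hjm, hij]
    norm_num
  have hgG : g ∈ G := G.mul_mem (G.mul_mem (G.inv_mem hx) (hG (monomialGL_mem _ _))) hx
  refine hT (hasTransvection_of_weight_ne hG hgG (i := j) (j := j) ?_ ?_ ?_) <;>
    rw [hgj] <;> intro h
  · exact one_ne_zero (α := F) (by linear_combination h5 - h)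
  · exact h2 (by linear_combination h5 - h)
  · exact h2 (by linear_combination h - h5)

theorem hasTransvection_of_sum_weight_eq_neg_one (h5 : (5 : F) = 0)
    (hG : monomialSubgroup ι F ≤ G) {x : GL ι F} (hx : x ∈ G) {s : Finset ι} {j : ι}
    (hs : ∑ k ∈ s, weight x k j = -1) : HasTransvection G := by
  have := neZero_two_of_five_eq_zero h5
  let b : Fˣ := Units.mk0 2 two_ne_zero
  have hb : ((b⁻¹ : Fˣ) : F) = 3 := by
    rw [Units.val_inv_eq_inv_val]
    exact inv_eq_of_mul_eq_one_right (by simp only [b, Units.val_mk0]; linear_combination h5)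
  have hd : (fun k => if k ∈ s then b else 1)⁻¹ = fun k => if k ∈ s then b⁻¹ else 1 := by
    ext k
    rw [Pi.inv_apply, apply_ite Inv.inv, inv_one]
  replace hs : ∑ k ∈ s, weight x⁻¹ j k = -1 := by simpa only [weight_inv] using hs
  refine hasTransvection_of_inv_apply_eq_zero hG (G.inv_mem (conj_diagonalGL_mem hG
    (G.inv_mem hx) fun k => if k ∈ s then b else 1)) (i := j) (j := j) ?_ ?_
  · rw [conj_diagonalGL_inv, hd, conj_diagonalGL_ite_apply_self, hs, hb]
    intro h
    exact one_ne_zero (α := F) (by linear_combination -h)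
  · rw [inv_inv, conj_diagonalGL_ite_apply_self, hs, Units.val_mk0]
    ring

theorem hasTransvection_of_card_eq_five [Fintype F] (hF : Fintype.card F = 5)
    (hι : 3 ≤ Fintype.card ι) (hG : monomialSubgroup ι F ≤ G) {x : GL ι F} (hx : x ∈ G)
    {i j l : ι} (hil : i ≠ l) (hi : x i j ≠ 0) (hl : x l j ≠ 0) : HasTransvection G := by
  have h5 := five_eq_zero_of_card_eq_five hF
  have := neZero_two_of_five_eq_zero h5
  by_contra hT
  have hw (k : ι) (hk : x k j ≠ 0) : weight x k j = 3 := by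
    by_contra h3
    refine hT (hasTransvection_of_weight_ne hG hx
      (weight_ne_zero_of_not_hasTransvection hG hT hx hk) ?_
      fun h => h3 (by linear_combination 3 * h - weight x k j * h5))
    obtain rfl | hki := eq_or_ne k i
    · exact weight_ne_one_of_not_hasTransvection (.inl hF) hG hT hx hl hil
    · exact weight_ne_one_of_not_hasTransvection (.inl hF) hG hT hx hi hki
  obtain ⟨m, hmi, hml⟩ := Cardinal.exists_ne_ne_of_three_le
    (by rw [Cardinal.mk_fintype]; exact_mod_cast hι) i l
  by_cases hmj : x m j = 0
  · exact hT (hasTransvection_of_weight_eq_three h5 hG hx hmi.symm hmj (hw i hi))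
  · refine hT (hasTransvection_of_sum_weight_eq_neg_one h5 hG hx (s := {i, l, m}) (j := j) ?_)
    rw [Finset.sum_insert (by simp [hil, hmi.symm]), Finset.sum_pair hml.symm, hw i hi, hw l hl,
      hw m hmj]
    linear_combination 2 * h5

end FieldOfOrderFive

theorem le_monomialSubgroup_of_not_hasTransvection {ι F : Type*} [DecidableEq ι] [Fintype ι]
    [Field F] [Fintype F] [NeZero (2 : F)] {G : Subgroup (GL ι F)}
    (hF : 7 ≤ Fintype.card F ∨ Fintype.card F = 5 ∧ 3 ≤ Fintype.card ι)
    (hG : monomialSubgroup ι F ≤ G) (hT : ¬HasTransvection G) : G ≤ monomialSubgroup ι F := by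
  intro x hx
  by_contra hxN
  obtain ⟨j, i, l, hi, hl, hil⟩ := exists_column_of_notMem_monomialSubgroup hxN
  rcases hF with hF | ⟨hF, hι⟩
  · exact hT (hasTransvection_of_weight_ne hG hx
      (weight_ne_zero_of_not_hasTransvection hG hT hx hi)
      (weight_ne_one_of_not_hasTransvection (.inr hF) hG hT hx hl hil)
      (two_mul_weight_ne_one_of_not_hasTransvection hF hG hT hx i j))
  · exact hT (hasTransvection_of_card_eq_five hF hι hG hx hil hi hl)

section LineStabilizer

variable {ι F : Type*} [Fintype ι] [Field F]

theorem mul_apply_of_column_eq_zero {x y : Matrix ι ι F} {o : ι}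
    (hy : ∀ k, k ≠ o → y k o = 0) (k : ι) : (x * y) k o = x k o * y o o := by
  rw [mul_apply]
  exact Finset.sum_eq_single o (fun m _ hm => by rw [hy m hm, mul_zero]) (by simp)

theorem exists_prod_eq_one_and_apply_ne [Fintype F] [NeZero (2 : F)] (hF : 3 < Fintype.card F)
    {o p q l : ι} (hpq : p ≠ q) (hp : p ≠ o) (hq : q ≠ o) (hl : l ≠ o) :
    ∃ d : ι → Fˣ, ∏ j, d j = 1 ∧ d p = d q ∧ d o ≠ d l := by
  classical
  by_cases hlpq : l = p ∨ l = q
  · have hne : (1 : Fˣ) ≠ -1 := fun h => by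
      have h' := congrArg Units.val h
      rw [Units.val_one, Units.val_neg, Units.val_one] at h'
      exact two_ne_zero (α := F) (by linear_combination h')
    refine ⟨Pi.mulSingle p (-1) * Pi.mulSingle q (-1)⁻¹,
      prod_mulSingle_mul_mulSingle_inv p q _, by simp [hpq, hpq.symm], ?_⟩
    rcases hlpq with rfl | rfl <;> simpa [hp.symm, hq.symm, hpq, hpq.symm] using hne
  · push Not at hlpq
    obtain ⟨b, hb⟩ := exists_unit_eval_ne_zero (f := (X ^ 2 - 1 : F[X]))
      (fun h => by simpa using congrArg (eval 0) h)
      (lt_of_le_of_lt (Nat.succ_le_succ (by compute_degree : _ ≤ 2)) hF)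
    refine ⟨Pi.mulSingle o b * Pi.mulSingle l b⁻¹, prod_mulSingle_mul_mulSingle_inv o l b,
      by simp [hp, hq, hlpq.1.symm, hlpq.2.symm], fun h => hb ?_⟩
    replace h : b = b⁻¹ := by simpa [hl, hl.symm] using h
    rw [eq_inv_iff_mul_eq_one, Units.ext_iff, Units.val_mul, Units.val_one] at h
    rw [eval_sub, eval_pow, eval_X, eval_one]
    linear_combination h

variable [DecidableEq ι]

variable (F) in
/-- The stabilizer in `GL ι F` of the coordinate line of index `o`. -/
def lineStabilizer (o : ι) : Subgroup (GL ι F) where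
  carrier := {x | ∀ k, k ≠ o → x k o = 0}
  one_mem' := fun _ hk => one_apply_ne hk
  mul_mem' := fun {x y} hx hy k hk => by
    rw [Units.val_mul, mul_apply_of_column_eq_zero hy, hx k hk, zero_mul]
  inv_mem' := fun {x} hx k hk => by
    have hmul (k : ι) : x⁻¹ k o * x o o = (1 : Matrix ι ι F) k o := by
      rw [← mul_apply_of_column_eq_zero hx, ← Units.val_mul, inv_mul_cancel, Units.val_one]
    refine (mul_eq_zero.mp ((hmul k).trans (one_apply_ne hk))).resolve_right fun h => ?_
    simpa [-coe_units_inv, h] using hmul o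

/-- The action of the stabilizer of a coordinate line on the quotient by that line. -/
def lineQuotient (o : ι) : lineStabilizer F o →* GL {j // j ≠ o} F :=
  MonoidHom.toHomUnits
    { toFun x := x.val.val.submatrix Subtype.val Subtype.val
      map_one' := submatrix_one _ Subtype.val_injective
      map_mul' x y := by
        ext k l
        rw [submatrix_apply, Subgroup.coe_mul, Units.val_mul, mul_apply, mul_apply,
          Fintype.sum_eq_add_sum_subtype_ne _ o, x.2 k k.2, zero_mul, zero_add]
        rfl }

theorem lineQuotient_apply {o : ι} (x : lineStabilizer F o) (i j : {j // j ≠ o}) :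
    lineQuotient o x i j = x.val i j := rfl

theorem det_eq_mul_det_lineQuotient {o : ι} (x : lineStabilizer F o) :
    x.val.val.det = x.val o o * (lineQuotient o x).val.det := by
  rw [twoBlockTriangular_det x.val.val (· = o) (by rintro i hi j rfl; exact x.2 i hi)]
  congr 1
  convert det_eq_elem_of_subsingleton (x.val.val.toSquareBlockProp (· = o))
    (⟨o, rfl⟩ : {j // j = o})
  rfl

theorem hasTransvection_of_lineQuotient_eq_one [NeZero (2 : F)] {G : Subgroup (GL ι F)}
    (hN : specialMonomialSubgroup ι F ≤ G) (hdet : G ≤ GeneralLinearGroup.det.ker) {o : ι}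
    {x : lineStabilizer F o} (hx : x.val ∈ G) (hx1 : x ≠ 1) (hquot : lineQuotient o x = 1) :
    HasTransvection G := by
  have hoo : x.val o o = 1 := by
    have h := mem_ker_det.mp (hdet hx)
    rwa [det_eq_mul_det_lineQuotient, hquot, Units.val_one, det_one, mul_one] at h
  have hentry (i j : ι) (hi : i ≠ o) : x.val i j = (1 : Matrix ι ι F) i j := by
    obtain rfl | hj := eq_or_ne j o
    · rw [x.2 i hi, one_apply_ne hi]
    · have h := congrArg (fun y : GL {j // j ≠ o} F => y ⟨i, hi⟩ ⟨j, hj⟩) hquot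
      simpa [lineQuotient_apply, one_apply] using h
  obtain ⟨l, hl⟩ : ∃ l, x.val o l - (1 : Matrix ι ι F) o l ≠ 0 := by
    by_contra! h
    refine hx1 (Subtype.ext (Units.ext (ext fun i j => ?_)))
    obtain rfl | hi := eq_or_ne i o
    · exact sub_eq_zero.mp (h j)
    · exact hentry i j hi
  refine hasTransvection_of_rowUnipotent hN hx
    (r := fun j => x.val o j - (1 : Matrix ι ι F) o j) (ext fun i j => ?_)
    (by rw [hoo, one_apply_eq, sub_self]) hl
  rw [Matrix.add_apply, vecMulVec_apply]
  obtain rfl | hi := eq_or_ne i o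
  · simp
  · simp [hentry i j hi, hi]

theorem exists_special_lineQuotient_eq (o : ι) (σ : Equiv.Perm {j // j ≠ o})
    (d : {j // j ≠ o} → Fˣ) :
    ∃ x : lineStabilizer F o, x.val ∈ specialMonomialSubgroup ι F ∧
      lineQuotient o x = monomialGL σ d := by
  have hτ : Equiv.Perm.ofSubtype σ o = o :=
    Equiv.Perm.ofSubtype_apply_of_not_mem σ (by simp)
  let e (j : ι) : Fˣ :=
    if h : j ≠ o then d ⟨j, h⟩ else (GeneralLinearGroup.det (monomialGL σ d))⁻¹
  let x : lineStabilizer F o := ⟨monomialGL (Equiv.Perm.ofSubtype σ) e, fun k hk => by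
    rw [monomialGL_apply, hτ, if_neg hk]⟩
  have hquot : lineQuotient o x = monomialGL σ d := by
    ext k l
    rw [lineQuotient_apply, monomialGL_apply, monomialGL_apply, Equiv.Perm.ofSubtype_apply_coe]
    simp [e, l.2, Subtype.ext_iff]
  refine ⟨x, ⟨monomialGL_mem _ _, mem_ker_det.mpr ?_⟩, hquot⟩
  rw [det_eq_mul_det_lineQuotient, hquot, monomialGL_apply, hτ, if_pos rfl]
  simpa [e] using inv_mul_cancel₀ (GeneralLinearGroup.det (monomialGL σ d)).ne_zero

/-- The group induced on the quotient by a coordinate line by the elements of `G` preserving that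
line. -/
def inducedQuotient (G : Subgroup (GL ι F)) (o : ι) : Subgroup (GL {j // j ≠ o} F) :=
  (G.comap (lineStabilizer F o).subtype).map (lineQuotient o)

variable {G : Subgroup (GL ι F)}

theorem monomialSubgroup_le_inducedQuotient (hN : specialMonomialSubgroup ι F ≤ G) (o : ι) :
    monomialSubgroup {j // j ≠ o} F ≤ inducedQuotient G o := by
  rintro _ ⟨σ, d, rfl⟩
  obtain ⟨x, hx, hquot⟩ := exists_special_lineQuotient_eq o σ d
  exact ⟨x, hN hx, hquot⟩

theorem hasTransvection_of_lineQuotient_eq_transvection_of_row_ne [Fintype F] [NeZero (2 : F)]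
    (hF : 3 < Fintype.card F) (hN : specialMonomialSubgroup ι F ≤ G)
    (hdet : G ≤ GeneralLinearGroup.det.ker) {o : ι} {p q : {j // j ≠ o}} (hpq : p ≠ q) {a : F}
    {x : lineStabilizer F o} (hx : x.val ∈ G)
    (hquot : lineQuotient o x = SpecialLinearGroup.toGL (SpecialLinearGroup.transvection hpq a))
    {l : ι} (hlo : l ≠ o) (hl : x.val o l ≠ 0) : HasTransvection G := by
  -- The commutator of `x` with a diagonal matrix that commutes with it only modulo the line.
  obtain ⟨d, hd, hdpq, hdol⟩ :=
    exists_prod_eq_one_and_apply_ne hF (Subtype.coe_ne_coe.mpr hpq) p.2 q.2 hlo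
  let D : lineStabilizer F o := ⟨diagonalGL d, fun k hk => by
    rw [coe_diagonalGL, diagonal_apply_ne _ hk]⟩
  have hDquot : lineQuotient o D = diagonalGL fun j : {j // j ≠ o} => d j := by
    ext i j
    rw [lineQuotient_apply, coe_diagonalGL, coe_diagonalGL, diagonal_apply, diagonal_apply]
    simp only [Subtype.ext_iff]
  have hDG : D.val ∈ G := hN (diagonalGL_mem_special hd)
  refine hasTransvection_of_lineQuotient_eq_one hN hdet (x := D * x * D⁻¹ * x⁻¹)
    (G.mul_mem (G.mul_mem (G.mul_mem hDG hx) (G.inv_mem hDG)) (G.inv_mem hx)) ?_ ?_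
  · intro hcomm
    rw [mul_inv_eq_one, mul_inv_eq_iff_eq_mul] at hcomm
    have h := congrArg (fun y : lineStabilizer F o => y.val o l) hcomm
    simp only [Subgroup.coe_mul, Units.val_mul, D, coe_diagonalGL, diagonal_mul,
      mul_diagonal] at h
    exact hdol (Units.ext (mul_right_cancel₀ hl (h.trans (mul_comm _ _))))
  · rw [map_mul, map_mul, map_mul, map_inv, map_inv, mul_inv_eq_one, hDquot, hquot,
      ← monomialGL_one_left, transvection_conj_monomialGL]
    simp [hdpq, mul_comm _ a]

theorem coe_eq_transvection_of_lineQuotient_eq {o : ι} {p q : {j // j ≠ o}} (hpq : p ≠ q) {a : F}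
    {x : lineStabilizer F o} (hdet : x.val.val.det = 1)
    (hquot : lineQuotient o x = SpecialLinearGroup.toGL (SpecialLinearGroup.transvection hpq a))
    (hrow : ∀ l, l ≠ o → x.val o l = 0) : x.val.val = transvection (p : ι) q a := by
  have hoo : x.val o o = 1 := by
    rwa [det_eq_mul_det_lineQuotient, hquot, SpecialLinearGroup.coe_GL_coe_matrix,
      Matrix.SpecialLinearGroup.det_coe, mul_one] at hdet
  ext i j
  obtain rfl | hi := eq_or_ne i o
  · obtain rfl | hj := eq_or_ne j i
    · simp [hoo, transvection, p.2]
    · simp [hrow j hj, transvection, hj.symm, p.2]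
  · obtain rfl | hj := eq_or_ne j o
    · simp [show x.val i j = 0 from x.2 i hi, transvection, hi, q.2]
    · have h := congrArg (fun y : GL {j // j ≠ o} F => y ⟨i, hi⟩ ⟨j, hj⟩) hquot
      rw [lineQuotient_apply] at h
      refine h.trans ?_
      change transvection p q a _ _ = _
      simp [transvection, one_apply, single_apply, Subtype.ext_iff]

theorem hasTransvection_of_inducedQuotient [Fintype F] [NeZero (2 : F)]
    (hF : 3 < Fintype.card F) (hN : specialMonomialSubgroup ι F ≤ G)
    (hdet : G ≤ GeneralLinearGroup.det.ker) {o : ι} (hT : HasTransvection (inducedQuotient G o)) :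
    HasTransvection G := by
  obtain ⟨p, q, hpq, a, ha, x, hx, hquot⟩ := hT
  by_cases hrow : ∃ l, l ≠ o ∧ x.val o l ≠ 0
  · obtain ⟨l, hlo, hl⟩ := hrow
    exact hasTransvection_of_lineQuotient_eq_transvection_of_row_ne hF hN hdet hpq hx hquot
      hlo hl
  · push Not at hrow
    exact hasTransvection_of_coe_eq hx (Subtype.coe_ne_coe.mpr hpq) ha
      (coe_eq_transvection_of_lineQuotient_eq hpq (mem_ker_det.mp (hdet hx)) hquot hrow)

theorem inf_lineStabilizer_le_of_not_hasTransvection [Fintype F] [NeZero (2 : F)]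
    (hF : 7 ≤ Fintype.card F ∨ Fintype.card F = 5 ∧ 4 ≤ Fintype.card ι)
    (hN : specialMonomialSubgroup ι F ≤ G) (hdet : G ≤ GeneralLinearGroup.det.ker)
    (hT : ¬HasTransvection G) (o : ι) : G ⊓ lineStabilizer F o ≤ monomialSubgroup ι F := by
  rintro x ⟨hxG, hxo⟩
  lift x to lineStabilizer F o using hxo
  obtain ⟨σ, d, hquot⟩ : lineQuotient o x ∈ monomialSubgroup {j // j ≠ o} F := by
    refine le_monomialSubgroup_of_not_hasTransvection ?_
      (monomialSubgroup_le_inducedQuotient hN o)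
      (fun h => hT (hasTransvection_of_inducedQuotient (by lia) hN hdet h)) ⟨x, hxG, rfl⟩
    rw [Fintype.card_subtype_compl, Fintype.card_subtype_eq]
    lia
  obtain ⟨m, hm, hmquot⟩ := exists_special_lineQuotient_eq o σ d
  by_contra hxN
  refine hT (hasTransvection_of_lineQuotient_eq_one hN hdet (x := x * m⁻¹)
    (G.mul_mem hxG (G.inv_mem (hN hm))) (fun h => hxN ?_) ?_)
  · rw [mul_inv_eq_one.mp h]
    exact specialMonomialSubgroup_le hm
  · rw [map_mul, map_inv, hmquot, hquot, mul_inv_cancel]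

theorem mem_monomialSubgroup_of_column (hN : specialMonomialSubgroup ι F ≤ G)
    (hline : ∀ o, G ⊓ lineStabilizer F o ≤ monomialSubgroup ι F) {x : GL ι F} (hx : x ∈ G)
    {i o : ι} (hcol : ∀ k, k ≠ i → x k o = 0) : x ∈ monomialSubgroup ι F := by
  have : Nonempty ι := ⟨i⟩
  obtain ⟨d, hd⟩ := exists_monomialGL_mem_special (F := F) (Equiv.swap i o)
  refine (Subgroup.mul_mem_cancel_left _ (specialMonomialSubgroup_le hd)).mp
    (hline o ⟨G.mul_mem (hN hd) hx, fun k hk => ?_⟩)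
  obtain ⟨k, rfl⟩ := (Equiv.swap i o).surjective k
  rw [monomialGL_mul_apply, hcol k (by rintro rfl; simp at hk), mul_zero]

end LineStabilizer

section ColumnWeights

theorem exists_perm_preserving_apply_eq {ι F : Type*} [DecidableEq ι] [Fintype ι] [Field F]
    (hι : 3 ≤ Fintype.card ι ∨ Fintype.card ι = 2 ∧ ∃ z : F, z ^ 2 = -1) {p : ι → Prop} {i j : ι}
    (hi : p i) (hj : p j) (hij : i ≠ j) :
    ∃ (σ : Equiv.Perm ι) (d : ι → Fˣ) (c : Fˣ), σ i = j ∧ (∀ k, p (σ k) ↔ p k) ∧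
      (∀ k, p k → d k = c) ∧ ((Equiv.Perm.sign σ : ℤ) : F) * ∏ k, (d k : F) = 1 := by
  have hswap {a b : ι} (ha : p a) (hb : p b) (k : ι) : p (Equiv.swap a b k) ↔ p k := by
    obtain rfl | hka := eq_or_ne k a
    · simp [ha, hb]
    obtain rfl | hkb := eq_or_ne k b
    · simp [ha, hb]
    rw [Equiv.swap_apply_of_ne_of_ne hka hkb]
  rcases hι with hι | ⟨hι, z, hz⟩
  · obtain ⟨l, hli, hlj⟩ := Cardinal.exists_ne_ne_of_three_le
      (by rw [Cardinal.mk_fintype]; exact_mod_cast hι) i j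
    by_cases hl : p l
    · refine ⟨Equiv.swap i j * Equiv.swap j l, 1, 1, ?_, fun k => ?_, fun _ _ => rfl, ?_⟩
      · rw [Equiv.Perm.mul_apply, Equiv.swap_apply_of_ne_of_ne hij hli.symm,
          Equiv.swap_apply_left]
      · rw [Equiv.Perm.mul_apply, hswap hi hj, hswap hj hl]
      · rw [Equiv.Perm.sign_mul, Equiv.Perm.sign_swap hij, Equiv.Perm.sign_swap hlj.symm]
        simp
    · refine ⟨Equiv.swap i j, Pi.mulSingle l (-1), 1, Equiv.swap_apply_left i j, hswap hi hj,
        fun k hk => Pi.mulSingle_eq_of_ne (by rintro rfl; exact hl hk) _, ?_⟩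
      rw [← Units.coe_prod, Finset.prod_pi_mulSingle', Equiv.Perm.sign_swap hij]
      simp
  · have hz0 : z ≠ 0 := by rintro rfl; simp at hz
    refine ⟨Equiv.swap i j, fun _ => Units.mk0 z hz0, Units.mk0 z hz0,
      Equiv.swap_apply_left i j, hswap hi hj, fun _ _ => rfl, ?_⟩
    rw [Finset.prod_const, Finset.card_univ, hι, Units.val_mk0, hz, Equiv.Perm.sign_swap hij]
    simp

variable {ι F : Type*} [DecidableEq ι] [Fintype ι] [Field F]

theorem row_eq_of_mem_monomialSubgroup {t : GL ι F} (ht : t ∈ monomialSubgroup ι F) {o : ι}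
    {c : F} (h : ∀ k, t k o = c * (1 : Matrix ι ι F) k o) (m : ι) :
    t o m = c * (1 : Matrix ι ι F) o m := by
  obtain ⟨σ, d, rfl⟩ := ht
  have hσ : σ o = o := by
    by_contra hne
    refine (d o).ne_zero ?_
    rw [← mul_zero c, ← one_apply_ne hne, ← h (σ o), monomialGL_apply, if_pos rfl]
  obtain rfl | hm := eq_or_ne m o
  · exact h m
  · rw [monomialGL_apply, if_neg, one_apply_ne hm.symm, mul_zero]
    intro ho
    exact hm (σ.injective (ho.symm.trans hσ.symm))

theorem inv_mul_mul_apply_of_eigenvector {a g : GL ι F} {o : ι} {c : F}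
    (h : ∀ k, (a * g) k o = c * g k o) (k : ι) :
    (g⁻¹ * a * g) k o = c * (1 : Matrix ι ι F) k o := by
  have hag : (a * g).val.col o = c • g.val.col o := funext h
  calc (g⁻¹ * a * g) k o = (g⁻¹.val *ᵥ (a * g).val.col o) k := by rw [mul_assoc]; rfl
    _ = c * (g⁻¹ * g) k o := by rw [hag, mulVec_smul]; rfl
    _ = c * (1 : Matrix ι ι F) k o := by rw [inv_mul_cancel, Units.val_one]

theorem diagonalGL_mul_mem_special_conj {G : Subgroup (GL ι F)}
    (hN : specialMonomialSubgroup ι F ≤ G) {x : GL ι F} (hx : x ∈ G) (u : ι → Fˣ) {m : GL ι F}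
    (hm : m ∈ specialMonomialSubgroup ι F) :
    (diagonalGL u * x)⁻¹ * m * (diagonalGL u * x) ∈ G := by
  have hconj : (diagonalGL u)⁻¹ * m * diagonalGL u ∈ specialMonomialSubgroup ι F :=
    ⟨(monomialSubgroup ι F).mul_mem ((monomialSubgroup ι F).mul_mem
      ((monomialSubgroup ι F).inv_mem (diagonalGL_mem u)) hm.1) (diagonalGL_mem u), by
      simpa using (MonoidHom.normal_ker GeneralLinearGroup.det).conj_mem _ hm.2 (diagonalGL u)⁻¹⟩
  simpa only [_root_.mul_inv_rev, mul_assoc] using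
    G.mul_mem (G.mul_mem (G.inv_mem hx) (hN hconj)) hx

theorem exists_diagonalGL_mul_apply_eq_one (x : GL ι F) (o : ι) :
    ∃ u : ι → Fˣ, ∀ k, x k o ≠ 0 → (diagonalGL u * x) k o = 1 := by
  classical
  refine ⟨fun k => if h : x k o = 0 then 1 else (Units.mk0 (x k o) h)⁻¹, fun k hk => ?_⟩
  rw [Units.val_mul, coe_diagonalGL, diagonal_mul, dif_neg hk, Units.val_inv_eq_inv_val,
    Units.val_mk0, inv_mul_cancel₀ hk]

theorem diagonalGL_mul_apply_eq_zero {x : GL ι F} (u : ι → Fˣ) {k o : ι} :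
    (diagonalGL u * x) k o = 0 ↔ x k o = 0 := by
  rw [Units.val_mul, coe_diagonalGL, diagonal_mul, mul_eq_zero, or_iff_right (u k).ne_zero]

theorem weight_diagonalGL_mul (u : ι → Fˣ) (x : GL ι F) (i j : ι) :
    weight (diagonalGL u * x) i j = weight x i j := by
  rw [weight, weight, _root_.mul_inv_rev, ← map_inv, Units.val_mul, Units.val_mul, coe_diagonalGL,
    coe_diagonalGL, diagonal_mul, mul_diagonal, Pi.inv_apply, Units.val_inv_eq_inv_val]
  have := (u i).ne_zero
  field_simp

variable {G : Subgroup (GL ι F)}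

-- If `m` maps column `o` of `g` to `c` times itself, then `g⁻¹ * m * g` fixes a coordinate line, so
-- it is monomial, and hence row `o` of `g⁻¹` is mapped to `c` times itself by `m`.
theorem inv_apply_perm_mul (hline : ∀ o, G ⊓ lineStabilizer F o ≤ monomialSubgroup ι F)
    {σ : Equiv.Perm ι} {d : ι → Fˣ} {g : GL ι F} (hg : g⁻¹ * monomialGL σ d * g ∈ G) {o : ι} {c : F}
    (h : ∀ k, d k * g k o = c * g (σ k) o) (l : ι) : g⁻¹ o (σ l) * d l = c * g⁻¹ o l := by
  have hcol := inv_mul_mul_apply_of_eigenvector (a := monomialGL σ d) (g := g) (o := o) (c := c)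
    fun k => by
      obtain ⟨k, rfl⟩ := σ.surjective k
      rw [monomialGL_mul_apply, h]
  have hrow := row_eq_of_mem_monomialSubgroup
    (hline o ⟨hg, fun k hk => by rw [hcol, one_apply_ne hk, mul_zero]⟩) hcol
  calc g⁻¹ o (σ l) * d l = (g⁻¹ * monomialGL σ d * g * g⁻¹) o l := by
        rw [mul_inv_cancel_right, mul_monomialGL_apply]
    _ = c * g⁻¹ o l := by
        rw [Units.val_mul, mul_apply, Finset.sum_congr rfl fun m _ => by rw [hrow m]]
        simp [-coe_units_inv, one_apply]

theorem weight_eq_weight_of_column (hN : specialMonomialSubgroup ι F ≤ G)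
    (hline : ∀ o, G ⊓ lineStabilizer F o ≤ monomialSubgroup ι F)
    (hι : 3 ≤ Fintype.card ι ∨ Fintype.card ι = 2 ∧ ∃ z : F, z ^ 2 = -1) {x : GL ι F}
    (hx : x ∈ G) {i j o : ι} (hi : x i o ≠ 0) (hj : x j o ≠ 0) : weight x i o = weight x j o := by
  obtain rfl | hij := eq_or_ne i j
  · rfl
  obtain ⟨σ, d, c, rfl, hσ, hd, hdet⟩ :=
    exists_perm_preserving_apply_eq hι (p := fun k => x k o ≠ 0) hi hj hij
  obtain ⟨u, hu⟩ := exists_diagonalGL_mul_apply_eq_one x o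
  have h := inv_apply_perm_mul hline
    (diagonalGL_mul_mem_special_conj hN hx u (monomialGL_mem_special hdet)) (o := o) (c := c)
    (fun k => by
      by_cases hk : x k o = 0
      · rw [(diagonalGL_mul_apply_eq_zero u).mpr hk,
          (diagonalGL_mul_apply_eq_zero u).mpr (not_ne_iff.mp fun h => (hσ k).mp h hk),
          mul_zero, mul_zero]
      · rw [hu k hk, hu (σ k) ((hσ k).mpr hk), hd k hk]) i
  rw [hd i hi, mul_comm] at h
  rw [← weight_diagonalGL_mul u, ← weight_diagonalGL_mul u x (σ i), weight, weight, hu i hi,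
    hu _ hj, mul_left_cancel₀ c.ne_zero h]

open Classical in
theorem card_mul_weight_eq_one (hN : specialMonomialSubgroup ι F ≤ G)
    (hline : ∀ o, G ⊓ lineStabilizer F o ≤ monomialSubgroup ι F)
    (hι : 3 ≤ Fintype.card ι ∨ Fintype.card ι = 2 ∧ ∃ z : F, z ^ 2 = -1) {x : GL ι F}
    (hx : x ∈ G) {i o : ι} (hi : x i o ≠ 0) :
    (Finset.card {k | x k o ≠ 0} : F) * weight x i o = 1 := by
  rw [← sum_weight_column x o, ← nsmul_eq_mul, ← Finset.sum_const,
    ← Finset.sum_filter_of_ne (f := fun k => weight x k o) (p := fun k => x k o ≠ 0)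
      fun k _ h => left_ne_zero_of_mul h]
  refine Finset.sum_congr rfl fun k hk => ?_
  exact weight_eq_weight_of_column hN hline hι hx hi (Finset.mem_filter.mp hk).2

theorem weight_eq_zero_or_exists_mul_eq_one (hN : specialMonomialSubgroup ι F ≤ G)
    (hline : ∀ o, G ⊓ lineStabilizer F o ≤ monomialSubgroup ι F)
    (hι : 3 ≤ Fintype.card ι ∨ Fintype.card ι = 2 ∧ ∃ z : F, z ^ 2 = -1) {x : GL ι F}
    (hx : x ∈ G) (i o : ι) :
    weight x i o = 0 ∨ ∃ m ∈ Finset.Icc 1 (Fintype.card ι), (m : F) * weight x i o = 1 := by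
  classical
  by_cases hi : x i o = 0
  · exact .inl (by rw [weight, hi, zero_mul])
  · exact .inr ⟨_, Finset.mem_Icc.mpr ⟨Finset.card_pos.mpr ⟨i, by simpa using hi⟩,
      Finset.card_le_univ _⟩, card_mul_weight_eq_one hN hline hι hx hi⟩

end ColumnWeights

section SmallRank

section FieldElements

variable {F : Type*} [Field F] [Fintype F] {V : Finset F}

theorem exists_unit_eval_ne_zero_and_forall_mul_eval_ne (hV : 0 ∉ V) {f g w : F[X]} {d : ℕ}
    (hf : f.eval 0 ≠ 0) (hg : g.eval 0 ≠ 0) (hw : w.eval 0 = 0)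
    (hgd : g.natDegree ≤ d) (hwd : w.natDegree ≤ d)
    (hcard : f.natDegree + d * V.card + 1 < Fintype.card F) :
    ∃ b : Fˣ, f.eval (b : F) ≠ 0 ∧ ∀ v ∈ V, v * g.eval (b : F) ≠ w.eval (b : F) := by
  have hprod : (∏ v ∈ V, (C v * g - w)).eval 0 ≠ 0 := by
    rw [eval_prod]
    refine Finset.prod_ne_zero_iff.mpr fun v hv => ?_
    simp only [eval_sub, eval_mul, eval_C, hw, sub_zero]
    exact mul_ne_zero (ne_of_mem_of_not_mem hv hV) hg
  have hdeg : (∏ v ∈ V, (C v * g - w)).natDegree ≤ d * V.card := by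
    refine (natDegree_prod_le _ _).trans ((Finset.sum_le_card_nsmul V _ d fun v _ => ?_).trans ?_)
    · exact (natDegree_sub_le _ _).trans (max_le ((natDegree_C_mul_le _ _).trans hgd) hwd)
    · rw [smul_eq_mul, mul_comm]
  obtain ⟨b, hb⟩ := exists_unit_eval_ne_zero (f := f * ∏ v ∈ V, (C v * g - w))
    (fun h => mul_ne_zero hf hprod (by rw [← eval_mul, h, eval_zero]))
    (by have := natDegree_mul_le (p := f) (q := ∏ v ∈ V, (C v * g - w)); lia)
  rw [eval_mul, eval_prod] at hb
  refine ⟨b, left_ne_zero_of_mul hb, fun v hv h => ?_⟩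
  refine Finset.prod_ne_zero_iff.mp (right_ne_zero_of_mul hb) v hv ?_
  rw [eval_sub, eval_mul, eval_C, h, sub_self]

theorem exists_unit_conj_ne_zero_and_forall_mul_ne_one (hV : 0 ∉ V)
    (hcard : 3 + 2 * V.card < Fintype.card F) {k c : F} (hkc : k * c = 1) (hk : k - 1 ≠ 0) :
    ∃ b : Fˣ, (1 + ((b : F) - 1) * c) * (1 + ((b : F)⁻¹ - 1) * c) ≠ 0 ∧
      ∀ v ∈ V, v * ((1 + ((b : F) - 1) * c) * (1 + ((b : F)⁻¹ - 1) * c)) ≠ 1 := by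
  have hdeg : ((X + C (k - 1)) * (C (k - 1) * X + 1)).natDegree ≤ 2 := by compute_degree
  obtain ⟨b, hb, hbV⟩ := exists_unit_eval_ne_zero_and_forall_mul_eval_ne hV
    (f := (X + C (k - 1)) * (C (k - 1) * X + 1)) (g := (X + C (k - 1)) * (C (k - 1) * X + 1))
    (w := C (k ^ 2) * X) (by simpa using hk) (by simpa using hk) (by simp) hdeg
    (by compute_degree!) (by lia)
  simp only [eval_mul, eval_add, eval_X, eval_C, eval_one] at hb hbV
  have hk0 : k ≠ 0 := left_ne_zero_of_mul_eq_one hkc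
  have hvalue : k ^ 2 * b * ((1 + ((b : F) - 1) * c) * (1 + ((b : F)⁻¹ - 1) * c)) =
      (b + (k - 1)) * ((k - 1) * b + 1) := by
    rw [eq_inv_of_mul_eq_one_right hkc]
    field_simp [b.ne_zero]
    ring
  refine ⟨b, fun h => hb ?_, fun v hv h => hbV v hv ?_⟩
  · rw [← hvalue, h, mul_zero]
  · rw [← hvalue]
    linear_combination k ^ 2 * b * h

theorem exists_unit_add_inv_ne_zero_and_forall_mul_sq_ne_one (hV : 0 ∉ V)
    (hcard : 3 + 4 * V.card < Fintype.card F) {n c : F} (hnc : n * c = 1) :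
    ∃ b : Fˣ, 1 + ((b : F) - 1) * c + ((b : F)⁻¹ - 1) * c ≠ 0 ∧
      ∀ v ∈ V, v * (1 + ((b : F) - 1) * c + ((b : F)⁻¹ - 1) * c) ^ 2 ≠ 1 := by
  have hdeg : (X ^ 2 + C (n - 2) * X + 1).natDegree ≤ 2 := by compute_degree
  obtain ⟨b, hb, hbV⟩ := exists_unit_eval_ne_zero_and_forall_mul_eval_ne hV
    (f := X ^ 2 + C (n - 2) * X + 1) (g := (X ^ 2 + C (n - 2) * X + 1) ^ 2)
    (w := C (n ^ 2) * X ^ 2) (d := 4) (by simp) (by simp) (by simp) (by compute_degree)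
    (by compute_degree!) (by lia)
  simp only [eval_mul, eval_add, eval_X, eval_C, eval_one, eval_pow] at hb hbV
  have hn0 : n ≠ 0 := left_ne_zero_of_mul_eq_one hnc
  have hvalue : n * b * (1 + ((b : F) - 1) * c + ((b : F)⁻¹ - 1) * c) =
      b ^ 2 + (n - 2) * b + 1 := by
    rw [eq_inv_of_mul_eq_one_right hnc]
    field_simp [b.ne_zero]
    ring
  refine ⟨b, fun h => hb ?_, fun v hv h => hbV v hv ?_⟩
  · rw [← hvalue, h, mul_zero]
  · rw [← hvalue]
    linear_combination n ^ 2 * b ^ 2 * h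

end FieldElements

variable {ι F : Type*} [DecidableEq ι] [Fintype ι] [Field F]

theorem conj_diagonalGL_mulSingle_mul_mulSingle_apply (x : GL ι F) {j l : ι} (hjl : j ≠ l)
    (b c : Fˣ) (i : ι) :
    (x * diagonalGL (Pi.mulSingle j b * Pi.mulSingle l c : ι → Fˣ) * x⁻¹) i i =
      1 + ((b : F) - 1) * weight x i j + ((c : F) - 1) * weight x i l := by
  rw [conj_diagonalGL_apply, one_apply_eq, add_assoc, Fintype.sum_eq_add j l hjl]
  · simp [weight, Pi.mulSingle_eq_of_ne hjl, Pi.mulSingle_eq_of_ne hjl.symm]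
  · rintro m ⟨hmj, hml⟩
    simp [Pi.mulSingle_eq_of_ne hmj, Pi.mulSingle_eq_of_ne hml]

theorem weight_conj_mulSingle_mul_mulSingle_inv (x : GL ι F) {j l : ι} (hjl : j ≠ l)
    (b : Fˣ) (i : ι) :
    weight (x * diagonalGL (Pi.mulSingle j b * Pi.mulSingle l b⁻¹ : ι → Fˣ) * x⁻¹) i i =
      (1 + ((b : F) - 1) * weight x i j + ((b : F)⁻¹ - 1) * weight x i l) *
        (1 + ((b : F)⁻¹ - 1) * weight x i j + ((b : F) - 1) * weight x i l) := by
  rw [weight, conj_diagonalGL_inv, mul_inv, ← Pi.mulSingle_inv, ← Pi.mulSingle_inv, inv_inv,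
    conj_diagonalGL_mulSingle_mul_mulSingle_apply x hjl,
    conj_diagonalGL_mulSingle_mul_mulSingle_apply x hjl, Units.val_inv_eq_inv_val]

theorem weight_self_eq_one_of_mem_monomialSubgroup {x : GL ι F} (hx : x ∈ monomialSubgroup ι F)
    {i : ι} (hi : x i i ≠ 0) : weight x i i = 1 := by
  obtain ⟨σ, d, rfl⟩ := hx
  have hσ : i = σ i := by
    by_contra h
    exact hi (by rw [monomialGL_apply, if_neg h])
  have h := mul_monomialGL_apply σ d (monomialGL σ d)⁻¹ i i
  rw [inv_mul_cancel, ← hσ, Units.val_one, one_apply_eq] at h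
  rw [weight, mul_comm, monomialGL_apply, if_pos hσ, ← h]

variable {G : Subgroup (GL ι F)}

open Classical in
theorem two_le_card_column (hN : specialMonomialSubgroup ι F ≤ G)
    (hline : ∀ o, G ⊓ lineStabilizer F o ≤ monomialSubgroup ι F) {x : GL ι F} (hx : x ∈ G)
    (hxm : x ∉ monomialSubgroup ι F) (o : ι) : 2 ≤ Finset.card {k | x k o ≠ 0} := by
  obtain ⟨j, hj⟩ := exists_apply_ne_zero x o
  contrapose! hxm
  refine mem_monomialSubgroup_of_column hN hline hx (i := j) (o := o) fun k hkj => ?_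
  by_contra hk
  exact hkj (Finset.card_le_one.mp (Nat.le_of_lt_succ hxm) k (by simpa using hk) j
    (by simpa using hj))

theorem conj_diagonalGL_mulSingle_mul_mulSingle_inv_mem (hN : specialMonomialSubgroup ι F ≤ G)
    {x : GL ι F} (hx : x ∈ G) (j l : ι) (b : Fˣ) :
    x * diagonalGL (Pi.mulSingle j b * Pi.mulSingle l b⁻¹ : ι → Fˣ) * x⁻¹ ∈ G :=
  G.mul_mem (G.mul_mem hx (hN (diagonalGL_mem_special (prod_mulSingle_mul_mulSingle_inv j l b))))
    (G.inv_mem hx)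

open Classical in
theorem apply_ne_zero_of_notMem_monomialSubgroup [Fintype F] [NeZero (2 : F)]
    (hN : specialMonomialSubgroup ι F ≤ G)
    (hline : ∀ o, G ⊓ lineStabilizer F o ≤ monomialSubgroup ι F)
    (hι : 3 ≤ Fintype.card ι ∨ Fintype.card ι = 2 ∧ ∃ z : F, z ^ 2 = -1)
    (hι4 : Fintype.card ι ≤ 4)
    (hcard : 3 + 2 * (((Finset.Icc 1 (Fintype.card ι)).image (Nat.cast : ℕ → F)).erase 0).card <
      Fintype.card F)
    {x : GL ι F} (hx : x ∈ G) (hxm : x ∉ monomialSubgroup ι F) (l o : ι) : x l o ≠ 0 := by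
  intro hl
  obtain ⟨j, hj⟩ := exists_apply_ne_zero x o
  have hjl : j ≠ l := by rintro rfl; exact hj hl
  have hkj := card_mul_weight_eq_one hN hline hι hx hj
  have hk2 := two_le_card_column hN hline hx hxm o
  have hkn : Finset.card {k | x k o ≠ 0} < Fintype.card ι :=
    Finset.card_lt_card (Finset.filter_ssubset.mpr ⟨l, Finset.mem_univ l, by simpa using hl⟩)
  have hk1 : (Finset.card {k | x k o ≠ 0} : F) - 1 ≠ 0 := by
    obtain h | h : Finset.card {k | x k o ≠ 0} = 2 ∨ Finset.card {k | x k o ≠ 0} = 3 := by lia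
    · rw [h]; norm_num
    · rw [h]; norm_num; exact two_ne_zero
  obtain ⟨b, hb, hbV⟩ := exists_unit_conj_ne_zero_and_forall_mul_ne_one
    (Finset.notMem_erase 0 _) hcard hkj hk1
  have hweight := weight_conj_mulSingle_mul_mulSingle_inv x⁻¹ hjl b o
  rw [weight_inv, weight_inv, show weight x l o = 0 by rw [weight, hl, zero_mul], mul_zero,
    mul_zero, add_zero, add_zero] at hweight
  rcases weight_eq_zero_or_exists_mul_eq_one hN hline hι
    (conj_diagonalGL_mulSingle_mul_mulSingle_inv_mem hN (G.inv_mem hx) j l b) o o with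
    h | ⟨m, hm, hmw⟩
  · exact hb (hweight.symm.trans h)
  · rw [hweight] at hmw
    exact hbV m (Finset.mem_erase.mpr ⟨left_ne_zero_of_mul_eq_one hmw,
      Finset.mem_image_of_mem _ hm⟩) hmw

open Classical in
theorem le_monomialSubgroup_of_card_le_four [Fintype F] [NeZero (2 : F)] [Nontrivial ι]
    (hN : specialMonomialSubgroup ι F ≤ G)
    (hline : ∀ o, G ⊓ lineStabilizer F o ≤ monomialSubgroup ι F)
    (hι : 3 ≤ Fintype.card ι ∨ Fintype.card ι = 2 ∧ ∃ z : F, z ^ 2 = -1)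
    (hι4 : Fintype.card ι ≤ 4)
    (hcard : 3 + 2 * (((Finset.Icc 1 (Fintype.card ι)).image (Nat.cast : ℕ → F)).erase 0).card <
      Fintype.card F)
    (hcard' : (Fintype.card ι : F) ≠ 0 →
      3 + 4 * ({1, (Fintype.card ι : F)} : Finset F).card < Fintype.card F) :
    G ≤ monomialSubgroup ι F := by
  intro x hx
  by_contra hxm
  have hweight {y : GL ι F} (hy : y ∈ G) (hym : y ∉ monomialSubgroup ι F) (i o : ι) :
      (Fintype.card ι : F) * weight y i o = 1 := by
    have hfull := apply_ne_zero_of_notMem_monomialSubgroup hN hline hι hι4 hcard hy hym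
    have := card_mul_weight_eq_one hN hline hι hy (hfull i o)
    rwa [Finset.filter_true_of_mem fun k _ => hfull k o, Finset.card_univ] at this
  obtain ⟨j, l, hjl⟩ := exists_pair_ne ι
  have hn0 := left_ne_zero_of_mul_eq_one (hweight hx hxm j j)
  obtain ⟨b, hb, hbV⟩ := exists_unit_add_inv_ne_zero_and_forall_mul_sq_ne_one
    (V := {1, (Fintype.card ι : F)}) (by simp [hn0.symm]) (hcard' hn0) (hweight hx hxm j j)
  have hl : weight x j l = weight x j j :=
    mul_left_cancel₀ hn0 ((hweight hx hxm j l).trans (hweight hx hxm j j).symm)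
  have hz := conj_diagonalGL_mulSingle_mul_mulSingle_inv_mem hN hx j l b
  have hzw := weight_conj_mulSingle_mul_mulSingle_inv x hjl b j
  have hzj := conj_diagonalGL_mulSingle_mul_mulSingle_apply x hjl b b⁻¹ j
  rw [hl] at hzw hzj
  rw [add_right_comm 1 (_ * _) (_ * _), ← sq, add_right_comm] at hzw
  rw [Units.val_inv_eq_inv_val] at hzj
  by_cases hzm : x * diagonalGL (Pi.mulSingle j b * Pi.mulSingle l b⁻¹ : ι → Fˣ) * x⁻¹ ∈
      monomialSubgroup ι F
  · refine hbV 1 (by simp) ?_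
    rw [one_mul, ← hzw, weight_self_eq_one_of_mem_monomialSubgroup hzm (hzj ▸ hb)]
  · exact hbV _ (by simp) (hzw ▸ hweight hz hzm j j)

end SmallRank

section LargeRank

variable {ι F : Type*} [DecidableEq ι] [Fintype ι] [Field F]

/-- The invertible matrices that map a set of column vectors onto itself. -/
def vectorSetStabilizer (W : Set (ι → F)) : Subgroup (GL ι F) where
  carrier := {x | ∀ v, x.val *ᵥ v ∈ W ↔ v ∈ W}
  one_mem' v := by rw [Units.val_one, one_mulVec]
  mul_mem' {x y} hx hy v := by rw [Units.val_mul, ← mulVec_mulVec, hx, hy]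
  inv_mem' {x} hx v := by
    rw [← hx, mulVec_mulVec, ← Units.val_mul, mul_inv_cancel, Units.val_one, one_mulVec]

theorem le_vectorSetStabilizer {G : Subgroup (GL ι F)} {W : Set (ι → F)}
    (h : ∀ x ∈ G, ∀ v ∈ W, x.val *ᵥ v ∈ W) : G ≤ vectorSetStabilizer W := by
  refine fun x hx v => ⟨fun hv => ?_, h x hx v⟩
  simpa only [mulVec_mulVec, ← Units.val_mul, inv_mul_cancel, Units.val_one, one_mulVec] using
    h x⁻¹ (G.inv_mem hx) _ hv

theorem exists_mem_forall_apply_ne_zero [Finite F] [NeZero (2 : F)] {W : Set (ι → F)}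
    (hW : W.Nonempty) (hW0 : 0 ∉ W) (hN : specialMonomialSubgroup ι F ≤ vectorSetStabilizer W)
    (hT : HasTransvection (vectorSetStabilizer W)) : ∃ v ∈ W, ∀ i, v i ≠ 0 := by
  classical
  obtain ⟨v, hv, hmax⟩ := Set.exists_max_image W
    (fun v => Finset.card {k | v k ≠ 0}) W.toFinite hW
  refine ⟨v, hv, fun k hk => ?_⟩
  obtain ⟨l, hl⟩ : ∃ l, v l ≠ 0 := Function.ne_iff.mp (ne_of_mem_of_not_mem hv hW0)
  have hkl : k ≠ l := by rintro rfl; exact hl hk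
  have hmem := (transvection_mem_of_hasTransvection hN hT hkl 1 v).mpr hv
  have hmulVec : (SpecialLinearGroup.toGL (SpecialLinearGroup.transvection hkl 1)).val *ᵥ v =
      v + Pi.single k (v l) := by
    change (1 + single k l 1) *ᵥ v = _
    rw [add_mulVec, one_mulVec, single_mulVec, one_mul, Pi.single]
  rw [hmulVec] at hmem
  refine (hmax _ hmem).not_gt (Finset.card_lt_card (Finset.ssubset_iff_of_subset ?_ |>.mpr
    ⟨k, by simpa [hk] using hl, by simp [hk]⟩))
  refine Finset.monotone_filter_right _ fun m _ hm => ?_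
  have hmk : m ≠ k := by rintro rfl; exact hm hk
  simpa [hmk] using hm

theorem exists_forall_apply_ne_zero [Fintype F] [NeZero (2 : F)]
    (hF : 7 ≤ Fintype.card F ∨ Fintype.card F = 5 ∧ 3 ≤ Fintype.card ι) {G : Subgroup (GL ι F)}
    (hN : specialMonomialSubgroup ι F ≤ G) (hG : ¬G ≤ monomialSubgroup ι F) (o : ι) :
    ∃ x ∈ G, ∀ i, x i o ≠ 0 := by
  by_contra! hzero
  set W : Set (ι → F) := {v | ∃ x ∈ G, x.val.col o = v}
  have hGW : G ≤ vectorSetStabilizer W := le_vectorSetStabilizer <| by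
    rintro y hy _ ⟨x, hx, rfl⟩
    exact ⟨y * x, G.mul_mem hy hx, rfl⟩
  have hNW : monomialSubgroup ι F ≤ vectorSetStabilizer W := le_vectorSetStabilizer <| by
    rintro _ ⟨σ, d, rfl⟩ _ ⟨x, hx, rfl⟩
    obtain ⟨i, hi⟩ := hzero x hx
    -- The column vanishes at `i`, so the determinant can be adjusted there without moving it.
    obtain ⟨ε, hε⟩ := exists_mul_diagonalGL_mem_special (monomialGL_mem σ d) i
    refine ⟨_, G.mul_mem (hN hε) hx, ?_⟩
    rw [mul_assoc]
    change (monomialGL σ d).val *ᵥ (diagonalGL (Pi.mulSingle i ε) * x).val.col o = _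
    congr 1
    ext k
    rw [col_apply, Units.val_mul, coe_diagonalGL, diagonal_mul]
    obtain rfl | hk := eq_or_ne k i
    · rw [col_apply, hi, mul_zero]
    · rw [Pi.mulSingle_eq_of_ne hk, Units.val_one, one_mul, col_apply]
  obtain ⟨_, ⟨x, hx, rfl⟩, hfull⟩ := exists_mem_forall_apply_ne_zero (W := W) ⟨_, 1, G.one_mem, rfl⟩
    (by
      rintro ⟨x, -, h0⟩
      obtain ⟨i, hi⟩ := exists_apply_ne_zero x o
      exact hi (congrFun h0 i))
    (hN.trans hGW)
    (by_contra fun hT =>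
      hG (hGW.trans (le_monomialSubgroup_of_not_hasTransvection hF hNW hT)))
  obtain ⟨i, hi⟩ := hzero x hx
  exact hfull i hi

theorem nat_card_perm_fixing {ι : Type*} [Fintype ι] (o : ι) :
    Nat.card {τ : Equiv.Perm ι // τ o = o} = (Fintype.card ι - 1).factorial := by
  classical
  have e : Equiv.Perm {j // j ≠ o} ≃ {τ : Equiv.Perm ι // τ o = o} :=
    (Equiv.Perm.subtypeEquivSubtypePerm (· ≠ o)).trans
      (Equiv.subtypeEquivRight fun f => by simp)
  rw [← Nat.card_congr e, Nat.card_eq_fintype_card, Fintype.card_perm,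
    Fintype.card_subtype_compl, Fintype.card_subtype_eq]

theorem alternatingGroup_hom_eq_one_of_fixes (hι : 5 ≤ Fintype.card ι) (o : ι)
    (θ : alternatingGroup ι →* Equiv.Perm ι) (hθ : ∀ σ, θ σ o = o) : θ = 1 := by
  have : Nontrivial ι := Fintype.one_lt_card_iff_nontrivial.mp (by lia)
  have hsimple := alternatingGroup.isSimpleGroup (α := ι) (by rwa [Nat.card_eq_fintype_card])
  refine MonoidHom.ker_eq_top_iff.mp (θ.normal_ker.eq_bot_or_eq_top.resolve_left fun h => ?_)
  have hinj : Function.Injective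
      (fun σ => ⟨θ σ, hθ σ⟩ : alternatingGroup ι → {τ : Equiv.Perm ι // τ o = o}) :=
    fun a b hab => (MonoidHom.ker_eq_bot_iff θ).mp h (congrArg Subtype.val hab)
  have hle := Nat.card_le_card_of_injective _ hinj
  have hcard := two_mul_nat_card_alternatingGroup (α := ι)
  rw [Nat.card_eq_fintype_card (α := Equiv.Perm ι), Fintype.card_perm] at hcard
  obtain ⟨m, hm⟩ : ∃ m, Fintype.card ι = m + 1 := ⟨Fintype.card ι - 1, by lia⟩
  rw [nat_card_perm_fixing, hm, Nat.add_sub_cancel] at hle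
  rw [hm, Nat.factorial_succ] at hcard
  have := Nat.mul_le_mul_right m.factorial (show 3 ≤ m + 1 by lia)
  have := m.factorial_pos
  lia

variable (ι F) in
theorem exists_perm_hom : ∃ θ : monomialSubgroup ι F →* Equiv.Perm ι,
    ∀ x, ∃ d, monomialGL (θ x) d = x.val := by
  choose θ d h using fun x : monomialSubgroup ι F => mem_monomialSubgroup.mp x.2
  refine ⟨MonoidHom.mk' θ fun x y => ?_, fun x => ⟨d x, h x⟩⟩
  refine (monomialGL_inj.mp (((h (x * y)).trans ?_).trans (monomialGL_mul _ _ (d x) (d y)))).1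
  rw [h, h, Subgroup.coe_mul]

theorem alternatingGroup_hom_eq_one_of_monomial (hι : 5 ≤ Fintype.card ι) (o : ι)
    (φ : alternatingGroup ι →* GL ι F) (hφ : ∀ σ, φ σ ∈ monomialSubgroup ι F)
    (ho : ∀ σ, φ σ ∈ lineStabilizer F o) : φ = 1 := by
  have : Nontrivial ι := Fintype.one_lt_card_iff_nontrivial.mp (by lia)
  have hsimple := alternatingGroup.isSimpleGroup (α := ι) (by rwa [Nat.card_eq_fintype_card])
  obtain ⟨θ, hθ⟩ := exists_perm_hom ι F
  have hone := alternatingGroup_hom_eq_one_of_fixes hι o (θ.comp (φ.codRestrict _ hφ)) fun σ => by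
    obtain ⟨d, hd⟩ := hθ (φ.codRestrict _ hφ σ)
    by_contra hne
    refine (d o).ne_zero ?_
    rw [← ho σ _ hne]
    change _ = (φ.codRestrict _ hφ σ).val _ o
    rw [← hd, monomialGL_apply, MonoidHom.comp_apply, if_pos rfl]
  have hdiag (σ : alternatingGroup ι) : ∃ d, diagonalGL d = φ σ := by
    obtain ⟨d, hd⟩ := hθ (φ.codRestrict _ hφ σ)
    rw [← MonoidHom.comp_apply, hone] at hd
    exact ⟨d, hd⟩
  refine MonoidHom.ker_eq_top_iff.mp (φ.normal_ker.eq_bot_or_eq_top.resolve_left fun h => ?_)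
  obtain ⟨g, hg⟩ := exists_ne (1 : alternatingGroup ι)
  have hcenter : g ∈ Subgroup.center (alternatingGroup ι) := Subgroup.mem_center_iff.mpr fun σ => by
    obtain ⟨d, hd⟩ := hdiag σ
    obtain ⟨e, he⟩ := hdiag g
    refine (MonoidHom.ker_eq_bot_iff φ).mp h ?_
    rw [map_mul, map_mul, ← hd, ← he, ← map_mul, ← map_mul, mul_comm]
  rw [alternatingGroup.center_eq_bot (by rw [Nat.card_eq_fintype_card]; lia)] at hcenter
  exact hg hcenter

theorem le_monomialSubgroup_of_five_le_card [Fintype F] [NeZero (2 : F)]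
    (hF : 7 ≤ Fintype.card F ∨ Fintype.card F = 5) (hι : 5 ≤ Fintype.card ι) {G : Subgroup (GL ι F)}
    (hN : specialMonomialSubgroup ι F ≤ G)
    (hline : ∀ o, G ⊓ lineStabilizer F o ≤ monomialSubgroup ι F) : G ≤ monomialSubgroup ι F := by
  by_contra hG
  have : Nontrivial ι := Fintype.one_lt_card_iff_nontrivial.mp (by lia)
  obtain ⟨o⟩ : Nonempty ι := inferInstance
  obtain ⟨x, hx, hfull⟩ := exists_forall_apply_ne_zero (hF.imp_right fun h => ⟨h, by lia⟩) hN hG o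
  obtain ⟨u, hu⟩ := exists_diagonalGL_mul_apply_eq_one x o
  set g := diagonalGL u * x
  have hmul (σ τ : Equiv.Perm ι) : monomialGL (σ * τ) (1 : ι → Fˣ) =
      monomialGL σ 1 * monomialGL τ 1 := by
    rw [monomialGL_mul]
    simp [Pi.one_def]
  let φ : alternatingGroup ι →* GL ι F :=
    MonoidHom.mk' (fun σ => g⁻¹ * monomialGL σ 1 * g) fun σ τ => by
      rw [Subgroup.coe_mul, hmul]
      group
  have hφG (σ : alternatingGroup ι) : φ σ ∈ G :=
    diagonalGL_mul_mem_special_conj hN hx u (monomialGL_mem_special (by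
      rw [Equiv.Perm.mem_alternatingGroup.mp σ.2]
      simp))
  -- Every permutation matrix fixes column `o` of `g`, whose entries are all equal to one.
  have hφo (σ : alternatingGroup ι) : φ σ ∈ lineStabilizer F o := fun k hk => by
    refine (inv_mul_mul_apply_of_eigenvector (c := 1) (fun l => ?_) k).trans ?_
    · obtain ⟨l, rfl⟩ := σ.val.surjective l
      rw [monomialGL_mul_apply, hu _ (hfull _), hu _ (hfull _), Pi.one_apply, Units.val_one]
    · rw [one_apply_ne hk, mul_zero]
  have hφ : φ = 1 := alternatingGroup_hom_eq_one_of_monomial hι o φ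
    (fun σ => hline o ⟨hφG σ, hφo σ⟩) hφo
  have := alternatingGroup.isSimpleGroup (α := ι) (by rwa [Nat.card_eq_fintype_card])
  obtain ⟨σ, hσ⟩ := exists_ne (1 : alternatingGroup ι)
  have hσ1 : g⁻¹ * monomialGL σ 1 * g = 1 := DFunLike.congr_fun hφ σ
  rw [mul_assoc, inv_mul_eq_one, right_eq_mul, ← monomialGL_one] at hσ1
  exact hσ (Subtype.ext (monomialGL_inj.mp hσ1).1)

end LargeRank

section Maximality

variable {ι F : Type*} [DecidableEq ι] [Fintype ι] [Field F] {G : Subgroup (GL ι F)}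

theorem center_le_monomialSubgroup : Subgroup.center (GL ι F) ≤ monomialSubgroup ι F := by
  rw [GeneralLinearGroup.center_eq_range_scalar]
  rintro _ ⟨c, rfl⟩
  refine ⟨1, fun _ => c, Units.ext ?_⟩
  rw [monomialGL_one_left, coe_diagonalGL]
  rfl

theorem transvection_notMem_monomialSubgroup {i j : ι} (hij : i ≠ j) {a : F} (ha : a ≠ 0) :
    SpecialLinearGroup.toGL (SpecialLinearGroup.transvection hij a) ∉ monomialSubgroup ι F := by
  refine fun h => hij (eq_of_mem_monomialSubgroup h (j := j) ?_ ?_)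
  · change transvection i j a i j ≠ 0
    simp [transvection, hij, ha]
  · change transvection i j a j j ≠ 0
    simp [transvection, hij]

theorem units_pow_bijective_of_coprime {F : Type*} [Field F] [Fintype F] {n : ℕ}
    (hn : (Fintype.card F - 1).Coprime n) : Function.Bijective fun c : Fˣ => c ^ n := by
  classical
  rw [← Fintype.card_units, ← Nat.card_eq_fintype_card] at hn
  exact (powCoprime hn).bijective

theorem det_toGL (A : SpecialLinearGroup ι F) :
    GeneralLinearGroup.det (SpecialLinearGroup.toGL A) = 1 :=
  Units.ext A.det_coe

section Coprime

variable [Fintype F] (hcop : (Fintype.card F - 1).Coprime (Fintype.card ι))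

include hcop in
theorem monomialSubgroup_le_sup_center_of_coprime (hN : specialMonomialSubgroup ι F ≤ G) :
    monomialSubgroup ι F ≤ G ⊔ Subgroup.center (GL ι F) := by
  intro x hx
  obtain ⟨c, hc : c ^ _ = _⟩ := (units_pow_bijective_of_coprime hcop).2 (GeneralLinearGroup.det x)
  have hcenter : GeneralLinearGroup.scalar ι c ∈ Subgroup.center (GL ι F) :=
    GeneralLinearGroup.center_eq_range_scalar (n := ι) (R := F) ▸ ⟨c, rfl⟩
  rw [← inv_mul_cancel_right x (GeneralLinearGroup.scalar ι c)]
  refine Subgroup.mul_mem_sup (hN ⟨(monomialSubgroup ι F).mul_mem hx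
    ((monomialSubgroup ι F).inv_mem (center_le_monomialSubgroup hcenter)), ?_⟩) hcenter
  change GeneralLinearGroup.det (x * _) = 1
  rw [map_mul, map_inv, GeneralLinearGroup.det_scalar, hc, mul_inv_cancel]

include hcop in
theorem mem_of_mem_sup_center_of_coprime (hdet : G ≤ GeneralLinearGroup.det.ker) {x : GL ι F}
    (hx : x ∈ G ⊔ Subgroup.center (GL ι F)) (hx1 : GeneralLinearGroup.det x = 1) : x ∈ G := by
  obtain ⟨y, hy, z, hz, rfl⟩ := Subgroup.mem_sup_of_normal_right.mp hx
  obtain ⟨c, rfl⟩ := GeneralLinearGroup.center_eq_range_scalar.le hz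
  have hy1 : GeneralLinearGroup.det y = 1 := hdet hy
  rw [map_mul, hy1, one_mul, GeneralLinearGroup.det_scalar] at hx1
  have hc1 : c = 1 := by
    refine (units_pow_bijective_of_coprime hcop).1 ?_
    change c ^ Fintype.card ι = 1 ^ Fintype.card ι
    rw [hx1, one_pow]
  rwa [hc1, map_one, mul_one]

include hcop in
theorem hasTransvection_of_hasTransvection_sup_center (hdet : G ≤ GeneralLinearGroup.det.ker)
    (hT : HasTransvection (G ⊔ Subgroup.center (GL ι F))) : HasTransvection G :=
  let ⟨i, j, hij, a, ha, h⟩ := hT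
  ⟨i, j, hij, a, ha, mem_of_mem_sup_center_of_coprime hcop hdet h (det_toGL _)⟩

end Coprime

theorem three_eq_zero_of_card_eq_nine {F : Type*} [Field F] [Fintype F]
    (hF : Fintype.card F = 9) : (3 : F) = 0 := by
  have h9 := FiniteField.cast_card_eq_zero F
  rw [hF] at h9
  exact (pow_eq_zero_iff two_ne_zero).mp (by rw [← h9]; norm_num : (3 : F) ^ 2 = 0)

theorem le_monomialSubgroup_of_card_le_four_of_thirteen_le [Fintype F] [NeZero (2 : F)]
    (hN : specialMonomialSubgroup ι F ≤ G)
    (hline : ∀ o, G ⊓ lineStabilizer F o ≤ monomialSubgroup ι F)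
    (hq : Fintype.card F % 4 = 1) (hF : 13 ≤ Fintype.card F) (hι : 2 ≤ Fintype.card ι)
    (hι4 : Fintype.card ι ≤ 4) : G ≤ monomialSubgroup ι F := by
  classical
  have : Nontrivial ι := Fintype.one_lt_card_iff_nontrivial.mp hι
  refine le_monomialSubgroup_of_card_le_four hN hline ?_ hι4 ?_ fun _ => ?_
  · obtain h | h := hι.eq_or_lt
    · obtain ⟨z, hz⟩ := FiniteField.isSquare_neg_one_iff (F := F).mpr (by lia)
      exact .inr ⟨h.symm, z, by rw [hz, sq]⟩
    · exact .inl h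
  · have herase := Finset.card_erase_le
      (s := (Finset.Icc 1 (Fintype.card ι)).image (Nat.cast : ℕ → F)) (a := 0)
    have himage := Finset.card_image_le
      (s := Finset.Icc 1 (Fintype.card ι)) (f := (Nat.cast : ℕ → F))
    rw [Nat.card_Icc] at himage
    lia
  · have := Finset.card_le_two (a := (1 : F)) (b := (Fintype.card ι : F))
    lia

theorem le_monomialSubgroup_of_card_le_four_of_card_eq_nine [Fintype F] [NeZero (2 : F)]
    (hN : specialMonomialSubgroup ι F ≤ G)
    (hline : ∀ o, G ⊓ lineStabilizer F o ≤ monomialSubgroup ι F)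
    (hF : Fintype.card F = 9) (hι : 3 ≤ Fintype.card ι) (hι4 : Fintype.card ι ≤ 4) :
    G ≤ monomialSubgroup ι F := by
  classical
  have : Nontrivial ι := Fintype.one_lt_card_iff_nontrivial.mp (by lia)
  have h3 : (3 : F) = 0 := three_eq_zero_of_card_eq_nine hF
  have h4 : (4 : F) = 1 := by linear_combination h3
  refine le_monomialSubgroup_of_card_le_four hN hline (.inl hι) hι4 ?_ fun hι0 => ?_
  · have hsub : ((Finset.Icc 1 (Fintype.card ι)).image (Nat.cast : ℕ → F)).erase 0 ⊆ {1, 2} := by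
      intro z hz
      obtain ⟨hz0, m, ⟨hm1, hm⟩, rfl⟩ :
          z ≠ 0 ∧ ∃ m, (1 ≤ m ∧ m ≤ Fintype.card ι) ∧ (m : F) = z := by simpa using hz
      have hm4 := hm.trans hι4
      interval_cases m <;> simp_all
    have := (Finset.card_le_card hsub).trans Finset.card_le_two
    lia
  · have hone : (Fintype.card ι : F) = 1 := by
      obtain h | h : Fintype.card ι = 3 ∨ Fintype.card ι = 4 := by lia
      · exact absurd (by rw [h]; exact_mod_cast h3) hι0
      · rw [h]; exact_mod_cast h4
    simp [hone, hF]

theorem hasTransvection_of_not_le_monomialSubgroup [Fintype F] [NeZero (2 : F)]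
    (hN : specialMonomialSubgroup ι F ≤ G) (hdet : G ≤ GeneralLinearGroup.det.ker)
    (hq : Fintype.card F % 4 = 1) (hι : 2 ≤ Fintype.card ι)
    (hι4 : ¬(Fintype.card ι = 4 ∧ Fintype.card F = 5))
    (hι2 : Fintype.card ι = 2 → 13 ≤ Fintype.card F) (hG : ¬G ≤ monomialSubgroup ι F) :
    HasTransvection G := by
  have hF1 : 1 < Fintype.card F := Fintype.one_lt_card
  by_contra hT
  by_cases h35 : Fintype.card ι = 3 ∧ Fintype.card F = 5
  · have hcop : (Fintype.card F - 1).Coprime (Fintype.card ι) := by rw [h35.1, h35.2]; decide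
    exact hG (le_sup_left.trans (le_monomialSubgroup_of_not_hasTransvection
      (.inr ⟨h35.2, h35.1.ge⟩) (monomialSubgroup_le_sup_center_of_coprime hcop hN)
      (mt (hasTransvection_of_hasTransvection_sup_center hcop hdet) hT)))
  have hline (o : ι) : G ⊓ lineStabilizer F o ≤ monomialSubgroup ι F :=
    inf_lineStabilizer_le_of_not_hasTransvection (by lia) hN hdet hT o
  obtain h | h := le_or_gt (Fintype.card ι) 4
  · obtain hF | ⟨hF, hι3⟩ : 13 ≤ Fintype.card F ∨ Fintype.card F = 9 ∧ 3 ≤ Fintype.card ι := by lia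
    · exact hG (le_monomialSubgroup_of_card_le_four_of_thirteen_le hN hline hq hF hι h)
    · exact hG (le_monomialSubgroup_of_card_le_four_of_card_eq_nine hN hline hF hι3 h)
  · exact hG (le_monomialSubgroup_of_five_le_card (by lia) h hN hline)

end Maximality

section SpecialLinear

variable (ι F : Type*) [DecidableEq ι] [Fintype ι] [Field F]

/-- The group of monomial matrices in the special linear group. -/
def monomialSL : Subgroup (SpecialLinearGroup ι F) :=
  (monomialSubgroup ι F).comap SpecialLinearGroup.toGL

variable {ι F}

theorem mem_monomialSL {A : SpecialLinearGroup ι F} :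
    A ∈ monomialSL ι F ↔ SpecialLinearGroup.toGL A ∈ monomialSubgroup ι F := Iff.rfl

variable (ι F) in
theorem range_toGL :
    (SpecialLinearGroup.toGL : SpecialLinearGroup ι F →* GL ι F).range =
      GeneralLinearGroup.det.ker := by
  ext x
  refine ⟨?_, fun hx => ⟨⟨x.val, mem_ker_det.mp hx⟩, Units.ext rfl⟩⟩
  rintro ⟨A, rfl⟩
  exact det_toGL A

theorem map_toGL_monomialSL :
    (monomialSL ι F).map SpecialLinearGroup.toGL = specialMonomialSubgroup ι F := by
  rw [monomialSL, Subgroup.map_comap_eq, range_toGL, inf_comm, specialMonomialSubgroup]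

theorem center_le_monomialSL :
    Subgroup.center (SpecialLinearGroup ι F) ≤ monomialSL ι F := fun A hA =>
  center_le_monomialSubgroup ((SpecialLinearGroup.toGL_mem_center_iff A).mpr hA)

theorem monomialSL_ne_top [Nontrivial ι] : monomialSL ι F ≠ ⊤ := by
  obtain ⟨i, j, hij⟩ := exists_pair_ne ι
  intro h
  exact transvection_notMem_monomialSubgroup hij one_ne_zero
    (mem_monomialSL.mp (h ▸ Subgroup.mem_top (SpecialLinearGroup.transvection hij (1 : F))))

theorem isCoatom_monomialSL [Fintype F] [NeZero (2 : F)] (hq : Fintype.card F % 4 = 1)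
    (hι : 2 ≤ Fintype.card ι) (hι4 : ¬(Fintype.card ι = 4 ∧ Fintype.card F = 5))
    (hι2 : Fintype.card ι = 2 → 13 ≤ Fintype.card F) : IsCoatom (monomialSL ι F) := by
  have : Nontrivial ι := Fintype.one_lt_card_iff_nontrivial.mp hι
  refine ⟨monomialSL_ne_top, fun M hM => ?_⟩
  have hN : specialMonomialSubgroup ι F ≤ M.map SpecialLinearGroup.toGL :=
    map_toGL_monomialSL.ge.trans (Subgroup.map_mono hM.le)
  have hG : ¬M.map SpecialLinearGroup.toGL ≤ monomialSubgroup ι F := fun h =>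
    hM.not_ge (Subgroup.map_le_iff_le_comap.mp h)
  have hdet : M.map SpecialLinearGroup.toGL ≤ GeneralLinearGroup.det.ker :=
    (Subgroup.map_le_range _ _).trans (range_toGL ι F).le
  have hker := ker_det_le_of_hasTransvection hN
    (hasTransvection_of_not_le_monomialSubgroup hN hdet hq hι hι4 hι2 hG)
  rw [← range_toGL, MonoidHom.range_eq_map] at hker
  exact top_le_iff.mp ((Subgroup.map_le_map_iff_of_injective
    SpecialLinearGroup.toGL_injective).mp hker)

theorem span_col_of_toGL_eq {A : SpecialLinearGroup ι F} {σ : Equiv.Perm ι} {d : ι → Fˣ}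
    (h : monomialGL σ d = SpecialLinearGroup.toGL A) (j : ι) :
    Submodule.span F {A.1.col j} = Submodule.span F {Pi.single (σ j) (1 : F)} := by
  have hcol : A.1.col j = (d j : F) • Pi.single (σ j) (1 : F) := by
    ext k
    change SpecialLinearGroup.toGL A k j = _
    rw [← h, monomialGL_apply]
    by_cases hk : k = σ j <;> simp [hk]
  rw [hcol, Submodule.span_singleton_smul_eq (d j).isUnit]

theorem mem_monomialSL_of_span_col {A : SpecialLinearGroup ι F}
    (h : ∀ j, ∃ i, Submodule.span F {A.1.col j} = Submodule.span F {Pi.single i (1 : F)}) :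
    A ∈ monomialSL ι F := by
  refine mem_monomialSubgroup_of_forall_column fun j i l hi hl => ?_
  obtain ⟨m, hm⟩ := h j
  obtain ⟨c, hc⟩ := Submodule.mem_span_singleton.mp
    (hm ▸ Submodule.mem_span_singleton_self (A.1.col j))
  have hentry (k : ι) (hk : A.1 k j ≠ 0) : k = m := by
    by_contra hne
    refine hk ((congrFun hc k).symm.trans ?_)
    simp [hne]
  rw [hentry i hi, hentry l hl]

theorem map_toLin'_span_single (x : Matrix ι ι F) (j : ι) :
    Submodule.map (toLin' x) (Submodule.span F {Pi.single j (1 : F)}) =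
      Submodule.span F {x.col j} := by
  rw [Submodule.map_span, Set.image_singleton, toLin'_apply, mulVec_single_one]

theorem slDecompStabilizer_coordinate_lines (F : Type*) [Field F] (n : ℕ) :
    slDecompStabilizer F n (Set.range fun i : Fin n => Submodule.span F {Pi.single i (1 : F)}) =
      monomialSL (Fin n) F := by
  ext A
  change (fun W => Submodule.map (toLin' A.1) W) '' _ = _ ↔ _
  rw [← Set.range_comp]
  simp only [Function.comp_def, map_toLin'_span_single]
  constructor
  · refine fun h => mem_monomialSL_of_span_col fun j => ?_
    obtain ⟨i, hi⟩ := h.subset ⟨j, rfl⟩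
    exact ⟨i, hi.symm⟩
  · rintro ⟨σ, d, h⟩
    simp only [span_col_of_toGL_eq h]
    simpa only [Function.comp_def] using
      σ.surjective.range_comp fun i => Submodule.span F {Pi.single i (1 : F)}

theorem isCoatom_map_mk_iff {G : Type*} [Group G] {N H : Subgroup G} [N.Normal] (h : N ≤ H) :
    IsCoatom (H.map (QuotientGroup.mk' N)) ↔ IsCoatom H := by
  have hmk := QuotientGroup.mk'_surjective N
  have hcomap : (H.map (QuotientGroup.mk' N)).comap (QuotientGroup.mk' N) = H :=
    Subgroup.comap_map_eq_self (by rwa [QuotientGroup.ker_mk'])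
  refine ⟨fun hc => hcomap ▸ Subgroup.isCoatom_comap_of_surjective hmk hc, ?_⟩
  rintro ⟨hne, hmax⟩
  refine ⟨fun htop => hne ?_, fun M hM => ?_⟩
  · rw [← hcomap, htop, Subgroup.comap_top]
  · have hlt : H < M.comap (QuotientGroup.mk' N) := by
      rw [← hcomap]
      exact (Subgroup.comap_lt_comap_of_surjective hmk).mpr hM
    rw [← Subgroup.map_comap_eq_self_of_surjective hmk M, hmax _ hlt,
      Subgroup.map_top_of_surjective _ hmk]

end SpecialLinear

section RankTwo

variable {F : Type*} [Field F]

/-- The diagonal torus of `SL₂`, parametrized by the upper left entry. -/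
def torus : Fˣ →* SpecialLinearGroup (Fin 2) F where
  toFun a := ⟨!![(a : F), 0; 0, (a⁻¹ : Fˣ)], by simp⟩
  map_one' := Subtype.ext <| by simp [one_fin_two]
  map_mul' a b := Subtype.ext <| by
    change _ = !![(a : F), 0; 0, (a⁻¹ : Fˣ)] * !![(b : F), 0; 0, (b⁻¹ : Fˣ)]
    simp [mul_comm]

variable (F) in
/-- The nontrivial Weyl group representative in `SL₂`. -/
def weylElement : SpecialLinearGroup (Fin 2) F := ⟨!![0, 1; -1, 0], by simp⟩

theorem coe_torus (a : Fˣ) : (torus a).1 = !![(a : F), 0; 0, (a⁻¹ : Fˣ)] := rfl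

theorem coe_weylElement : (weylElement F).1 = !![0, 1; -1, 0] := rfl

theorem weylElement_mul_torus (a : Fˣ) :
    weylElement F * torus a = torus a⁻¹ * weylElement F := by
  ext k l
  fin_cases k <;> fin_cases l <;> simp [coe_torus, coe_weylElement, mul_apply]

theorem torus_mem_monomialSL (a : Fˣ) : torus a ∈ monomialSL (Fin 2) F := by
  refine ⟨1, ![a, a⁻¹], ?_⟩
  ext k l
  change monomialGL 1 ![a, a⁻¹] k l = (torus a).1 k l
  fin_cases k <;> fin_cases l <;> simp [coe_torus, monomialGL_apply]

theorem weylElement_mem_monomialSL : weylElement F ∈ monomialSL (Fin 2) F := by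
  refine ⟨Equiv.swap 0 1, ![-1, 1], ?_⟩
  ext k l
  change monomialGL (Equiv.swap 0 1) ![-1, 1] k l = (weylElement F).1 k l
  fin_cases k <;> fin_cases l <;> simp [coe_weylElement, monomialGL_apply]

theorem eq_torus_or_eq_torus_mul_weylElement {A : SpecialLinearGroup (Fin 2) F}
    (hA : A ∈ monomialSL (Fin 2) F) : ∃ a, A = torus a ∨ A = torus a * weylElement F := by
  have hcol (k l j : Fin 2) (hkl : k ≠ l) : A.1 k j = 0 ∨ A.1 l j = 0 := by
    by_contra! h
    exact hkl (eq_of_mem_monomialSubgroup hA h.1 h.2)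
  have hdet := A.det_coe
  have heta := eta_fin_two A.1
  rw [det_fin_two] at hdet
  obtain h00 | h10 := hcol 0 1 0 zero_ne_one
  · rw [h00, zero_mul, zero_sub] at hdet
    have h11 : A.1 1 1 = 0 := (hcol 0 1 1 zero_ne_one).resolve_left fun h => by simp [h] at hdet
    refine ⟨Units.mkOfMulEqOne (A.1 0 1) (-A.1 1 0) (by rw [mul_neg, hdet]), .inr ?_⟩
    refine Subtype.ext (heta.trans ?_)
    change _ = !![A.1 0 1, 0; 0, -A.1 1 0] * !![0, 1; -1, 0]
    simp [h00, h11]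
  · rw [h10, mul_zero, sub_zero] at hdet
    have h01 : A.1 0 1 = 0 := (hcol 0 1 1 zero_ne_one).resolve_right fun h => by simp [h] at hdet
    refine ⟨Units.mkOfMulEqOne (A.1 0 0) (A.1 1 1) hdet, .inl ?_⟩
    refine Subtype.ext (heta.trans ?_)
    change _ = !![A.1 0 0, 0; 0, A.1 1 1]
    rw [h01, h10]

/-- The group generated by `diag(i, -i)` and the Weyl element of `SL₂`. It is the quaternion group
of order eight when `i ^ 2 = -1`. -/
def quaternionSubgroup (i : Fˣ) : Subgroup (SpecialLinearGroup (Fin 2) F) :=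
  Subgroup.closure {torus i, weylElement F}

theorem torus_mem_quaternionSubgroup (i : Fˣ) : torus i ∈ quaternionSubgroup i :=
  Subgroup.subset_closure (.inl rfl)

theorem weylElement_mem_quaternionSubgroup (i : Fˣ) : weylElement F ∈ quaternionSubgroup i :=
  Subgroup.subset_closure (.inr rfl)

theorem quaternionSubgroup_le_monomialSL (i : Fˣ) :
    quaternionSubgroup i ≤ monomialSL (Fin 2) F := by
  rw [quaternionSubgroup, Subgroup.closure_le]
  rintro _ (rfl | rfl)
  · exact torus_mem_monomialSL i
  · exact weylElement_mem_monomialSL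

theorem mem_normalizer_quaternionSubgroup [Finite F] {i : Fˣ} {A : SpecialLinearGroup (Fin 2) F}
    (hI : A * torus i * A⁻¹ ∈ quaternionSubgroup i)
    (hJ : A * weylElement F * A⁻¹ ∈ quaternionSubgroup i) :
    A ∈ Subgroup.normalizer (quaternionSubgroup i : Set (SpecialLinearGroup (Fin 2) F)) := by
  have hle : quaternionSubgroup i ≤ (quaternionSubgroup i).comap (MulAut.conj A).toMonoidHom := by
    conv_lhs => rw [quaternionSubgroup]
    rw [Subgroup.closure_le]
    rintro _ (rfl | rfl)
    · exact hI
    · exact hJ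
  exact Subgroup.mem_normalizer_fintype fun B hB => hle hB

theorem exists_pow_eq_sq {i : F} (hi : i ^ 2 = -1) {a : F} (ha : a ^ 8 = 1) :
    ∃ k : ℕ, i ^ k = a ^ 2 := by
  have h : (a ^ 2 - 1) * (a ^ 2 + 1) * ((a ^ 2 - i) * (a ^ 2 + i)) = 0 := by
    linear_combination ha - (a ^ 4 - 1) * hi
  obtain (h | h) | h | h := by simpa only [mul_eq_zero] using h
  · exact ⟨0, by linear_combination -h⟩
  · exact ⟨2, by linear_combination hi - h⟩
  · exact ⟨1, by linear_combination -h⟩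
  · exact ⟨3, by linear_combination i * hi - h⟩

theorem torus_sq_mem_quaternionSubgroup {i : Fˣ} (hi : (i : F) ^ 2 = -1) {a : Fˣ} (ha : a ^ 8 = 1) :
    torus (a ^ 2) ∈ quaternionSubgroup i := by
  obtain ⟨k, hk⟩ := exists_pow_eq_sq hi (a := (a : F))
    (by rw [← Units.val_pow_eq_pow_val, ha, Units.val_one])
  rw [← Units.val_pow_eq_pow_val, ← Units.val_pow_eq_pow_val, Units.val_inj] at hk
  rw [← hk, map_pow]
  exact (quaternionSubgroup i).pow_mem (torus_mem_quaternionSubgroup i) k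

theorem monomialSL_le_normalizer_quaternionSubgroup [Finite F] {i : Fˣ} (hi : (i : F) ^ 2 = -1)
    (h8 : ∀ a : Fˣ, a ^ 8 = 1) :
    monomialSL (Fin 2) F ≤
      Subgroup.normalizer (quaternionSubgroup i : Set (SpecialLinearGroup (Fin 2) F)) := by
  have htorus (a : Fˣ) : torus a ∈
      Subgroup.normalizer (quaternionSubgroup i : Set (SpecialLinearGroup (Fin 2) F)) := by
    refine mem_normalizer_quaternionSubgroup ?_ ?_
    · rw [← map_mul, mul_comm, map_mul, mul_inv_cancel_right]
      exact torus_mem_quaternionSubgroup i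
    · rw [← map_inv, mul_assoc, weylElement_mul_torus, inv_inv, ← mul_assoc, ← map_mul, ← sq]
      exact (quaternionSubgroup i).mul_mem (torus_sq_mem_quaternionSubgroup hi (h8 a))
        (weylElement_mem_quaternionSubgroup i)
  intro A hA
  obtain ⟨a, rfl | rfl⟩ := eq_torus_or_eq_torus_mul_weylElement hA
  · exact htorus a
  · exact Subgroup.mul_mem _ (htorus a)
      (Subgroup.le_normalizer (weylElement_mem_quaternionSubgroup i))

/-- The Hurwitz quaternion `(1 + I + J + IJ) / 2` for `I = diag(i, -i)` and `J` the Weyl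
element. -/
def hurwitzElement [NeZero (2 : F)] {i : Fˣ} (hi : (i : F) ^ 2 = -1) :
    SpecialLinearGroup (Fin 2) F :=
  ⟨!![(1 + i) / 2, (1 + i) / 2; (-1 + i) / 2, (1 - i) / 2], by
    have h2 : (2 : F) ≠ 0 := NeZero.ne 2
    rw [det_fin_two_of]
    field_simp
    linear_combination -2 * hi⟩

theorem coe_hurwitzElement [NeZero (2 : F)] {i : Fˣ} (hi : (i : F) ^ 2 = -1) :
    (hurwitzElement hi).1 =
      !![(1 + i : F) / 2, (1 + i) / 2; (-1 + i) / 2, (1 - i) / 2] := rfl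

theorem inv_eq_neg_of_sq_eq_neg_one {i : F} (hi : i ^ 2 = -1) : i⁻¹ = -i :=
  inv_eq_of_mul_eq_one_right (by rw [mul_neg, ← sq, hi, neg_neg])

theorem hurwitzElement_mul_torus [NeZero (2 : F)] {i : Fˣ} (hi : (i : F) ^ 2 = -1) :
    hurwitzElement hi * torus i = weylElement F * hurwitzElement hi := by
  refine Subtype.ext ?_
  change (hurwitzElement hi).1 * (torus i).1 = (weylElement F).1 * (hurwitzElement hi).1
  rw [coe_hurwitzElement, coe_torus, coe_weylElement, Units.val_inv_eq_inv_val,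
    inv_eq_neg_of_sq_eq_neg_one hi, mul_fin_two, mul_fin_two]
  simp only [EmbeddingLike.apply_eq_iff_eq, vecCons_inj, and_true]
  refine ⟨⟨?_, ?_⟩, ?_, ?_⟩
  · linear_combination hi / 2
  · linear_combination -hi / 2
  · linear_combination hi / 2
  · linear_combination hi / 2

theorem hurwitzElement_mul_weylElement [NeZero (2 : F)] {i : Fˣ} (hi : (i : F) ^ 2 = -1) :
    hurwitzElement hi * weylElement F = torus i * weylElement F * hurwitzElement hi := by
  refine Subtype.ext ?_
  change (hurwitzElement hi).1 * (weylElement F).1 =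
    (torus i).1 * (weylElement F).1 * (hurwitzElement hi).1
  rw [coe_hurwitzElement, coe_torus, coe_weylElement, Units.val_inv_eq_inv_val,
    inv_eq_neg_of_sq_eq_neg_one hi, mul_fin_two, mul_fin_two, mul_fin_two]
  simp only [EmbeddingLike.apply_eq_iff_eq, vecCons_inj, and_true]
  refine ⟨⟨?_, ?_⟩, ?_, ?_⟩
  · linear_combination -hi / 2
  · linear_combination hi / 2
  · linear_combination -hi / 2
  · linear_combination -hi / 2

theorem hurwitzElement_mem_normalizer [NeZero (2 : F)] [Finite F] {i : Fˣ}
    (hi : (i : F) ^ 2 = -1) :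
    hurwitzElement hi ∈
      Subgroup.normalizer (quaternionSubgroup i : Set (SpecialLinearGroup (Fin 2) F)) := by
  refine mem_normalizer_quaternionSubgroup ?_ ?_
  · rw [hurwitzElement_mul_torus, mul_inv_cancel_right]
    exact weylElement_mem_quaternionSubgroup i
  · rw [hurwitzElement_mul_weylElement, mul_inv_cancel_right]
    exact Subgroup.mul_mem _ (torus_mem_quaternionSubgroup i)
      (weylElement_mem_quaternionSubgroup i)

theorem hurwitzElement_notMem_monomialSL [NeZero (2 : F)] {i : Fˣ} (hi : (i : F) ^ 2 = -1) :
    hurwitzElement hi ∉ monomialSL (Fin 2) F := by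
  have hprod : (1 + i : F) * (-1 + i) = -2 := by linear_combination hi
  have hne : (1 + i : F) * (-1 + i) ≠ 0 := hprod ▸ neg_ne_zero.mpr two_ne_zero
  intro h
  refine zero_ne_one (α := Fin 2) (eq_of_mem_monomialSubgroup h (j := 0) ?_ ?_)
  · exact div_ne_zero (left_ne_zero_of_mul hne) two_ne_zero
  · exact div_ne_zero (right_ne_zero_of_mul hne) two_ne_zero

theorem transvection_notMem_normalizer_quaternionSubgroup [NeZero (2 : F)] {i : Fˣ}
    (hi : (i : F) ^ 2 = -1) :
    SpecialLinearGroup.transvection (zero_ne_one' (Fin 2)) (1 : F) ∉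
      Subgroup.normalizer (quaternionSubgroup i : Set (SpecialLinearGroup (Fin 2) F)) := by
  set A : SpecialLinearGroup (Fin 2) F :=
    SpecialLinearGroup.transvection (zero_ne_one' (Fin 2)) 1
  have hA : A.1 = !![1, 1; 0, 1] := by
    change transvection 0 1 1 = _
    ext k l
    fin_cases k <;> fin_cases l <;> simp [transvection]
  have hconj : (A * torus i * A⁻¹).1 = !![(i : F), -(2 * i); 0, -i] := by
    change A.1 * (torus i).1 * A.1.adjugate = _
    rw [hA, coe_torus, adjugate_fin_two, Units.val_inv_eq_inv_val, inv_eq_neg_of_sq_eq_neg_one hi]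
    simp [two_mul]
  intro h
  have hmem := quaternionSubgroup_le_monomialSL i ((h _).mp (torus_mem_quaternionSubgroup i))
  refine zero_ne_one (α := Fin 2) (eq_of_mem_monomialSubgroup hmem (j := 1) ?_ ?_)
  · change (A * torus i * A⁻¹).1 0 1 ≠ 0
    simp [hconj, two_ne_zero]
  · change (A * torus i * A⁻¹).1 1 1 ≠ 0
    simp [hconj]

theorem exists_between_monomialSL_fin_two [Finite F] [NeZero (2 : F)] {i : Fˣ}
    (hi : (i : F) ^ 2 = -1) (h8 : ∀ a : Fˣ, a ^ 8 = 1) :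
    ∃ M, monomialSL (Fin 2) F < M ∧ M ≠ ⊤ := by
  refine ⟨Subgroup.normalizer (quaternionSubgroup i : Set _), ?_, ?_⟩
  · exact SetLike.lt_iff_le_and_exists.mpr
      ⟨monomialSL_le_normalizer_quaternionSubgroup hi h8, _, hurwitzElement_mem_normalizer hi,
        hurwitzElement_notMem_monomialSL hi⟩
  · exact fun h => transvection_notMem_normalizer_quaternionSubgroup hi (h ▸ Subgroup.mem_top _)

theorem not_isCoatom_monomialSL_fin_two [Fintype F] [NeZero (2 : F)]
    (hq : Fintype.card F % 4 = 1) (h13 : Fintype.card F < 13) :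
    ¬IsCoatom (monomialSL (Fin 2) F) := by
  obtain ⟨i, hi⟩ := FiniteField.isSquare_neg_one_iff.mpr (show Fintype.card F % 4 ≠ 3 by lia)
  have hi0 : i ≠ 0 := by rintro rfl; simp at hi
  have hcard : Fintype.card F - 1 ∣ 8 := by
    have h1 : 1 < Fintype.card F := Fintype.one_lt_card
    obtain h | h : Fintype.card F = 5 ∨ Fintype.card F = 9 := by lia
    all_goals norm_num [h]
  have h8 (a : Fˣ) : a ^ 8 = 1 := by
    classical
    obtain ⟨c, hc⟩ := hcard
    rw [hc, pow_mul, ← Fintype.card_units, pow_card_eq_one, one_pow]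
  obtain ⟨M, hM, hM'⟩ := exists_between_monomialSL_fin_two (i := Units.mk0 i hi0)
    (by rw [Units.val_mk0, hi, sq]) h8
  exact fun h => hM' (h.2 M hM)

end RankTwo

section RankFour

variable {R : Type*} [CommRing R] [DecidableEq R]

variable (R) in
/-- Vectors in `R⁴` with one or two nonzero coordinates, or with product of coordinates `±1`.
For `R = 𝔽₅` they are the reductions modulo `2 + i` of the `240` roots of the `E₈` lattice, viewed
as a lattice of rank four over the Gaussian integers. -/
def gaussianE8Roots : Set (Fin 4 → R) :=
  {v | Finset.card {k | v k ≠ 0} = 1 ∨ Finset.card {k | v k ≠ 0} = 2 ∨ (∏ k, v k) ^ 2 = 1}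

theorem mem_gaussianE8Roots {v : Fin 4 → R} :
    v ∈ gaussianE8Roots R ↔ Finset.card {k | v k ≠ 0} = 1 ∨ Finset.card {k | v k ≠ 0} = 2 ∨
      (∏ k, v k) ^ 2 = 1 := Iff.rfl

instance : DecidablePred (· ∈ gaussianE8Roots R) := fun _ =>
  decidable_of_iff _ mem_gaussianE8Roots.symm

theorem map_mem_gaussianE8Roots_iff {S : Type*} [CommRing S] [DecidableEq S] (e : R ≃+* S)
    (v : Fin 4 → R) : e ∘ v ∈ gaussianE8Roots S ↔ v ∈ gaussianE8Roots R := by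
  simp only [mem_gaussianE8Roots, Function.comp_apply, ne_eq, EmbeddingLike.map_eq_zero_iff,
    ← map_prod, ← map_pow, EmbeddingLike.map_eq_one_iff]

theorem hadamard_mem_gaussianE8Roots_zmod_five (a b c d : ZMod 5) :
    ![a + b, a - b, c + d, d - c] ∈ gaussianE8Roots (ZMod 5) ↔
      ![a, b, c, d] ∈ gaussianE8Roots (ZMod 5) := by
  revert a b c d
  decide +kernel

variable {F : Type*} [Field F]

/-- Two Hadamard blocks, as an element of `SL₄` over a field with five elements: a non-monomial
matrix that preserves `gaussianE8Roots`. -/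
def hadamardElement (h5 : (5 : F) = 0) : SpecialLinearGroup (Fin 4) F :=
  ⟨!![1, 1, 0, 0; 1, -1, 0, 0; 0, 0, 1, 1; 0, 0, -1, 1], by
    simp [det_succ_row_zero, Fin.sum_univ_succ, Fin.succAbove]
    linear_combination -h5⟩

theorem hadamardElement_mulVec (h5 : (5 : F) = 0) (v : Fin 4 → F) :
    (hadamardElement h5).1 *ᵥ v = ![v 0 + v 1, v 0 - v 1, v 2 + v 3, v 3 - v 2] := by
  ext k
  fin_cases k <;> simp [hadamardElement, mulVec, dotProduct, Fin.sum_univ_four] <;> ring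

theorem hadamardElement_notMem_monomialSL (h5 : (5 : F) = 0) :
    hadamardElement h5 ∉ monomialSL (Fin 4) F := fun h =>
  zero_ne_one (eq_of_mem_monomialSubgroup h (j := 0) (i := 0) (l := 1)
    (one_ne_zero (α := F)) (one_ne_zero (α := F)))

variable [DecidableEq F]

theorem specialMonomialSubgroup_le_stabilizer_gaussianE8Roots :
    specialMonomialSubgroup (Fin 4) F ≤ vectorSetStabilizer (gaussianE8Roots F) := by
  refine le_vectorSetStabilizer ?_
  rintro _ ⟨⟨σ, d, rfl⟩, hdet⟩ v hv
  have hd : (∏ k, (d k : F)) ^ 2 = 1 := by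
    have hdet := mem_ker_det.mp hdet
    rw [det_monomialGL] at hdet
    rcases Int.units_eq_one_or (Equiv.Perm.sign σ) with h | h
    · simp_all
    · simp_all [neg_eq_iff_eq_neg]
  have hσ (k : Fin 4) : ((monomialGL σ d).val *ᵥ v) (σ k) = d k * v k :=
    monomialGL_mulVec σ d v k
  have hcard : Finset.card {k | ((monomialGL σ d).val *ᵥ v) k ≠ 0} =
      Finset.card {k | v k ≠ 0} := by
    refine (Finset.card_equiv σ fun k => ?_).symm
    simp [hσ]
  have hprod : (∏ k, ((monomialGL σ d).val *ᵥ v) k) ^ 2 = (∏ k, v k) ^ 2 := by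
    rw [← Equiv.prod_comp σ, Finset.prod_congr rfl fun k _ => hσ k, Finset.prod_mul_distrib,
      mul_pow, hd, one_mul]
  rwa [mem_gaussianE8Roots, hcard, hprod]

theorem transvection_notMem_stabilizer_gaussianE8Roots :
    SpecialLinearGroup.toGL (SpecialLinearGroup.transvection (zero_ne_one' (Fin 4)) (1 : F)) ∉
      vectorSetStabilizer (gaussianE8Roots F) := by
  have hmulVec : transvection 0 1 1 *ᵥ ![0, 1, 1, 0] = (![1, 1, 1, 0] : Fin 4 → F) := by
    ext k
    rw [transvection, add_mulVec, one_mulVec, single_mulVec]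
    fin_cases k <;> simp
  intro h
  have hmem : transvection 0 1 1 *ᵥ ![0, 1, 1, 0] ∈ gaussianE8Roots F :=
    (h _).mpr (by simp [mem_gaussianE8Roots, Finset.card_filter, Fin.sum_univ_four])
  rw [hmulVec] at hmem
  simp [mem_gaussianE8Roots, Finset.card_filter, Fin.sum_univ_four, Fin.prod_univ_four] at hmem

variable [Fintype F]

theorem hadamardElement_mem_stabilizer_gaussianE8Roots (hF : Fintype.card F = 5) :
    SpecialLinearGroup.toGL (hadamardElement (five_eq_zero_of_card_eq_five hF)) ∈
      vectorSetStabilizer (gaussianE8Roots F) := by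
  intro v
  change (hadamardElement (five_eq_zero_of_card_eq_five hF)).1 *ᵥ v ∈ _ ↔ _
  let e : F ≃+* ZMod 5 := (ZMod.ringEquivOfPrime F Nat.prime_five hF).symm
  rw [hadamardElement_mulVec, ← map_mem_gaussianE8Roots_iff e, ← map_mem_gaussianE8Roots_iff e]
  convert hadamard_mem_gaussianE8Roots_zmod_five (e (v 0)) (e (v 1)) (e (v 2)) (e (v 3)) using 2
  all_goals
    ext k
    fin_cases k <;> simp

omit [DecidableEq F] in
theorem not_isCoatom_monomialSL_fin_four (hF : Fintype.card F = 5) :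
    ¬IsCoatom (monomialSL (Fin 4) F) := by
  classical
  set M := (vectorSetStabilizer (gaussianE8Roots F)).comap SpecialLinearGroup.toGL
  have hle : monomialSL (Fin 4) F ≤ M := by
    rw [← Subgroup.map_le_iff_le_comap, map_toGL_monomialSL]
    exact specialMonomialSubgroup_le_stabilizer_gaussianE8Roots
  intro h
  have hM : M = ⊤ := h.2 M (SetLike.lt_iff_le_and_exists.mpr
    ⟨hle, _, hadamardElement_mem_stabilizer_gaussianE8Roots hF,
      hadamardElement_notMem_monomialSL _⟩)
  exact transvection_notMem_stabilizer_gaussianE8Roots (F := F)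
    (Subgroup.mem_comap.mp (hM.ge (Subgroup.mem_top _)))

end RankFour

section Index

theorem padicValNat_two_pow_sub_one_of_odd {q j : ℕ} (hq : Odd q) (hq1 : 1 < q) (hj : Odd j) :
    padicValNat 2 (q ^ j - 1) = padicValNat 2 (q - 1) := by
  have hodd : Odd (∑ i ∈ Finset.range j, q ^ i) := by
    rw [Finset.odd_sum_iff_odd_card_odd]
    simpa [hq.pow] using hj
  have hgeom : (∑ i ∈ Finset.range j, q ^ i) * (q - 1) = q ^ j - 1 := by
    zify [Nat.one_le_pow j q (by lia), hq1.le]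
    exact geom_sum_mul (q : ℤ) j
  rw [← hgeom, padicValNat.mul hodd.pos.ne' (by lia),
    padicValNat.eq_zero_of_not_dvd hodd.not_two_dvd_nat, zero_add]

theorem prod_pow_succ_sub_one_ne_zero {q : ℕ} (hq1 : 1 < q) (n : ℕ) :
    ∏ j ∈ Finset.range n, (q ^ (j + 1) - 1) ≠ 0 :=
  Finset.prod_ne_zero_iff.mpr fun j _ => (Nat.sub_pos_of_lt (Nat.one_lt_pow j.succ_ne_zero hq1)).ne'

theorem padicValNat_two_prod_pow_succ_sub_one {q e : ℕ} (hq : Odd q) (hq1 : 1 < q)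
    (he : padicValNat 2 (q + 1) = e + 1) (n : ℕ) :
    padicValNat 2 (∏ j ∈ Finset.range n, (q ^ (j + 1) - 1)) =
      padicValNat 2 n.factorial + n * padicValNat 2 (q - 1) + n / 2 * e := by
  induction n with
  | zero => simp
  | succ n ih =>
    have hne := prod_pow_succ_sub_one_ne_zero hq1 (n + 1)
    rw [Finset.prod_range_succ] at hne ⊢
    rw [padicValNat.mul (left_ne_zero_of_mul hne) (right_ne_zero_of_mul hne), ih,
      Nat.factorial_succ, padicValNat.mul n.succ_ne_zero n.factorial_ne_zero]
    rcases Nat.even_or_odd (n + 1) with hn | hn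
    · have hpow := padicValNat.pow_two_sub_pow hq1 (Nat.Odd.sub_odd hq odd_one).two_dvd
        hq.not_two_dvd_nat n.succ_ne_zero hn
      rw [one_pow, he] at hpow
      have hhalf : (n + 1) / 2 = n / 2 + 1 := by grind
      rw [hhalf]
      linarith
    · have hhalf : (n + 1) / 2 = n / 2 := by grind
      rw [padicValNat_two_pow_sub_one_of_odd hq hq1 hn, hhalf,
        padicValNat.eq_zero_of_not_dvd hn.not_two_dvd_nat]
      ring

theorem prod_pow_sub_pow_eq (q n : ℕ) :
    ∏ i : Fin n, (q ^ n - q ^ (i : ℕ)) =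
      (∏ i ∈ Finset.range n, q ^ i) * ∏ j ∈ Finset.range n, (q ^ (j + 1) - 1) := by
  rw [Fin.prod_univ_eq_prod_range (fun i => q ^ n - q ^ i),
    ← Finset.prod_range_reflect (fun j => q ^ (j + 1) - 1), ← Finset.prod_mul_distrib]
  refine Finset.prod_congr rfl fun i hi => ?_
  rw [Finset.mem_range] at hi
  rw [Nat.mul_sub, ← pow_add, mul_one]
  congr 2
  lia

theorem padicValNat_two_succ_eq_one_iff {q : ℕ} (hq : Odd q) :
    padicValNat 2 (q + 1) = 1 ↔ q % 4 = 1 := by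
  have h1 : 1 ≤ padicValNat 2 (q + 1) :=
    one_le_padicValNat_of_dvd q.succ_ne_zero (hq.add_odd odd_one).two_dvd
  have h4 : 2 ^ 2 ∣ q + 1 ↔ 2 ≤ padicValNat 2 (q + 1) :=
    padicValNat_dvd_iff_le q.succ_ne_zero
  obtain ⟨k, rfl⟩ := hq
  lia

theorem odd_iff_of_mul_factorial_eq {q n m : ℕ} (hq : Odd q) (hq1 : 1 < q) (hn : 2 ≤ n)
    (h : m * (n.factorial * (q - 1) ^ n) = ∏ i : Fin n, (q ^ n - q ^ (i : ℕ))) :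
    Odd m ↔ q % 4 = 1 := by
  have hodd : Odd (∏ i ∈ Finset.range n, q ^ i) :=
    Finset.prod_induction _ Odd (fun _ _ => Odd.mul) odd_one fun i _ => hq.pow
  have hprod := prod_pow_succ_sub_one_ne_zero hq1 n
  rw [prod_pow_sub_pow_eq] at h
  have hm : m ≠ 0 := left_ne_zero_of_mul (h ▸ mul_ne_zero hodd.pos.ne' hprod)
  have hpow : (q - 1) ^ n ≠ 0 := pow_ne_zero _ (by lia)
  obtain ⟨e, he⟩ : ∃ e, padicValNat 2 (q + 1) = e + 1 :=
    Nat.exists_eq_add_of_le'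
      (one_le_padicValNat_of_dvd q.succ_ne_zero (hq.add_odd odd_one).two_dvd)
  have hval : padicValNat 2 m = n / 2 * e := by
    have hv := congrArg (padicValNat 2) h
    rw [padicValNat.mul hm (mul_ne_zero n.factorial_ne_zero hpow),
      padicValNat.mul n.factorial_ne_zero hpow, padicValNat.pow, padicValNat.mul hodd.pos.ne' hprod,
      padicValNat.eq_zero_of_not_dvd hodd.not_two_dvd_nat, zero_add,
      padicValNat_two_prod_pow_succ_sub_one hq hq1 he] at hv
    linarith
  rw [← padicValNat_two_succ_eq_one_iff hq, he, ← Nat.not_even_iff_odd, even_iff_two_dvd,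
    dvd_iff_padicValNat_ne_zero hm, hval]
  have : n / 2 ≠ 0 := by lia
  simp [this]

theorem relIndex_eq_index_of_sup_eq_top {G : Type*} [Group G] {H K : Subgroup G} [K.Normal]
    (h : H ⊔ K = ⊤) : H.relIndex K = H.index := by
  have hstab : MulAction.stabilizer K ((1 : G) : G ⧸ H) = H.subgroupOf K := by
    ext k
    rw [MulAction.mem_stabilizer_iff, Subgroup.mem_subgroupOf]
    change ((k * 1 : G) : G ⧸ H) = _ ↔ _
    rw [mul_one, eq_comm, QuotientGroup.eq, inv_one, one_mul]
  have horbit : MulAction.orbit K ((1 : G) : G ⧸ H) = Set.univ := by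
    refine Set.eq_univ_of_forall fun x => ?_
    obtain ⟨g, rfl⟩ := QuotientGroup.mk_surjective x
    obtain ⟨k, hk, l, hl, rfl⟩ :=
      Subgroup.mem_sup_of_normal_left.mp (sup_comm H K ▸ h ▸ Subgroup.mem_top g)
    refine ⟨⟨k, hk⟩, ?_⟩
    change ((k * 1 : G) : G ⧸ H) = _
    rwa [mul_one, QuotientGroup.eq, inv_mul_cancel_left]
  rw [Subgroup.relIndex, ← hstab, MulAction.index_stabilizer, horbit, Set.ncard_univ,
    Subgroup.index]

variable {ι F : Type*} [DecidableEq ι] [Fintype ι] [Field F]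

theorem monomialSubgroup_sup_ker_det [Nonempty ι] :
    monomialSubgroup ι F ⊔ GeneralLinearGroup.det.ker = ⊤ := by
  obtain ⟨i⟩ := ‹Nonempty ι›
  refine eq_top_iff.mpr fun x _ => ?_
  have hdet := det_diagonalGL_mulSingle i (GeneralLinearGroup.det x)
  rw [← mul_inv_cancel_left (diagonalGL (Pi.mulSingle i (GeneralLinearGroup.det x))) x]
  refine Subgroup.mul_mem_sup (diagonalGL_mem _) ?_
  rw [MonoidHom.mem_ker, map_mul, map_inv, hdet, inv_mul_cancel]

theorem index_monomialSL [Nonempty ι] :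
    (monomialSL ι F).index = (monomialSubgroup ι F).index := by
  rw [monomialSL, Subgroup.index_comap, range_toGL,
    relIndex_eq_index_of_sup_eq_top monomialSubgroup_sup_ker_det]

theorem card_monomialSubgroup [Fintype F] :
    Nat.card (monomialSubgroup ι F) =
      (Fintype.card ι).factorial * (Fintype.card F - 1) ^ Fintype.card ι := by
  classical
  have hbij : Function.Bijective fun p : Equiv.Perm ι × (ι → Fˣ) =>
      (⟨monomialGL p.1 p.2, monomialGL_mem _ _⟩ : monomialSubgroup ι F) := by
    constructor
    · intro p p' h
      obtain ⟨hσ, hd⟩ := monomialGL_inj.mp (congrArg Subtype.val h)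
      exact Prod.ext hσ hd
    · rintro ⟨_, σ, d, rfl⟩
      exact ⟨(σ, d), rfl⟩
  rw [← Nat.card_eq_of_bijective _ hbij, Nat.card_eq_fintype_card, Fintype.card_prod,
    Fintype.card_perm, Fintype.card_fun, Fintype.card_units]

theorem odd_index_monomialSL_iff [Fintype F] (hF : Odd (Fintype.card F)) {n : ℕ} (hn : 2 ≤ n) :
    Odd (monomialSL (Fin n) F).index ↔ Fintype.card F % 4 = 1 := by
  have : Nonempty (Fin n) := ⟨⟨0, by lia⟩⟩
  rw [index_monomialSL]
  refine odd_iff_of_mul_factorial_eq hF Fintype.one_lt_card hn ?_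
  rw [← card_GL_field, ← (monomialSubgroup (Fin n) F).index_mul_card, card_monomialSubgroup,
    Fintype.card_fin]

end Index

/-- for `q` an odd prime power, `|F| = q` and `n ≥ 2`, the image in `PSLₙ(F)`
of the setwise stabilizer in `SL(n, F)` of the set of coordinate lines of `Fⁿ` is a maximal
subgroup of odd index iff `q ≡ 1 (mod 4)`, `(n, q) ≠ (4, 5)`, and `q ≥ 13` when `n = 2`. -/
theorem psl_coordinate_lines_stabilizer_maximal_odd_index_iff (q : ℕ) (hq_odd : Odd q)
    (hq_pp : IsPrimePow q) (F : Type) [Field F] [Fintype F] (hF : Fintype.card F = q)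
    (n : ℕ) (hn : 2 ≤ n) :
    (IsCoatom (Subgroup.map
        (QuotientGroup.mk' (Subgroup.center (Matrix.SpecialLinearGroup (Fin n) F)))
        (slDecompStabilizer F n
          (Set.range fun i : Fin n => Submodule.span F {Pi.single i (1 : F)}))) ∧
      Odd (Subgroup.map
        (QuotientGroup.mk' (Subgroup.center (Matrix.SpecialLinearGroup (Fin n) F)))
        (slDecompStabilizer F n
          (Set.range fun i : Fin n => Submodule.span F {Pi.single i (1 : F)}))).index) ↔
      q % 4 = 1 ∧ ¬(n = 4 ∧ q = 5) ∧ (n = 2 → 13 ≤ q) := by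
  subst hF
  have : NeZero (2 : F) := ⟨Ring.two_ne_zero fun h => Nat.not_even_iff_odd.mpr hq_odd
    (Nat.even_iff.mpr (FiniteField.even_card_iff_char_two.mp h))⟩
  rw [slDecompStabilizer_coordinate_lines, isCoatom_map_mk_iff center_le_monomialSL,
    Subgroup.index_map_eq _ (QuotientGroup.mk'_surjective _)
      (by rw [QuotientGroup.ker_mk']; exact center_le_monomialSL),
    odd_index_monomialSL_iff hq_odd hn]
  constructor
  · rintro ⟨hmax, hq⟩
    refine ⟨hq, ?_, ?_⟩
    · rintro ⟨rfl, h5⟩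
      exact not_isCoatom_monomialSL_fin_four h5 hmax
    · rintro rfl
      by_contra! h13
      exact not_isCoatom_monomialSL_fin_two hq h13 hmax
  · rintro ⟨hq, h4, h13⟩
    exact ⟨isCoatom_monomialSL hq (by simpa using hn) (by simpa using h4) (by simpa using h13), hq⟩
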